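/- arXiv:2312.00217 — 11 statements merged into one kernel-verified Lean document; each statement's English description precedes it below -/
import Mathlib

section
/- Let α and β be positive integers and let Cs, Sn : ℝ → ℝ be differentiable functions satisfying Cs'(θ) = −Sn(θ)^(2α−1) and Sn'(θ) = Cs(θ)^(2β−1) for all θ ∈ ℝ, together with Cs(0) = 1 and Sn(0) = 0. Then for every θ ∈ ℝ one has β·Sn(θ)^(2α) + α·Cs(θ)^(2β) = α. -/
/-- If `Cs`, `Sn` solve the Cauchy problem
`Cs' = -Sn^(2α-1)`, `Sn' = Cs^(2β-1)`, `Cs 0 = 1`, `Sn 0 = 0`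
(with `α, β` positive integers), then `β·Sn^(2α) + α·Cs^(2β) = α` everywhere. -/
theorem stmt_0 (α β : ℕ) (hα : 0 < α) (hβ : 0 < β) (Cs Sn : ℝ → ℝ)
    (hCs : ∀ θ : ℝ, HasDerivAt Cs (-(Sn θ) ^ (2 * α - 1)) θ)
    (hSn : ∀ θ : ℝ, HasDerivAt Sn ((Cs θ) ^ (2 * β - 1)) θ)
    (hCs0 : Cs 0 = 1) (hSn0 : Sn 0 = 0) :
    ∀ θ : ℝ, (β : ℝ) * (Sn θ) ^ (2 * α) + (α : ℝ) * (Cs θ) ^ (2 * β) = (α : ℝ) := by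
  have hd : ∀ x : ℝ, HasDerivAt
      (fun θ => (β : ℝ) * (Sn θ) ^ (2 * α) + (α : ℝ) * (Cs θ) ^ (2 * β)) 0 x := by
    intro x
    have h := (((hSn x).pow (2 * α)).const_mul (β : ℝ)).add
      (((hCs x).pow (2 * β)).const_mul (α : ℝ))
    refine h.congr_deriv ?_
    push_cast
    ring
  intro θ
  have h := is_const_of_deriv_eq_zero (fun x => (hd x).differentiableAt)
    (fun x => (hd x).deriv) θ 0
  have h1 : 2 * α ≠ 0 := by omega
  simpa [hCs0, hSn0, hα.ne', h1] using h
end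

section
/- Let α and β be positive integers. There exists exactly one pair of differentiable functions Cs, Sn : ℝ → ℝ satisfying Cs'(θ) = −Sn(θ)^(2α−1), Sn'(θ) = Cs(θ)^(2β−1) for all θ ∈ ℝ, with Cs(0) = 1 and Sn(0) = 0; moreover, both Cs and Sn are real-analytic functions on ℝ. -/
open Set

/-- Clamping to `[-M, M]`. -/
noncomputable def clampR (M x : ℝ) : ℝ := max (-M) (min x M)

lemma clampR_abs {M : ℝ} (hM : 0 ≤ M) (x : ℝ) : |clampR M x| ≤ M := by
  unfold clampR
  rw [abs_le]
  exact ⟨le_max_left _ _, max_le (by linarith) (min_le_right _ _)⟩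

lemma clampR_eq {M x : ℝ} (h : |x| ≤ M) : clampR M x = x := by
  unfold clampR
  rw [abs_le] at h
  rw [min_eq_left h.2, max_eq_right h.1]

lemma clampR_cont (M : ℝ) : Continuous (clampR M) := by
  unfold clampR; fun_prop

lemma clampR_neg {M : ℝ} (hM : 0 ≤ M) (x : ℝ) : clampR M (-x) = -clampR M x := by
  unfold clampR
  grind

lemma clampR_sub (M x y : ℝ) : |clampR M x - clampR M y| ≤ |x - y| := by
  unfold clampR
  refine (abs_max_sub_max_le_max _ _ _ _).trans ?_
  simp only [sub_self, abs_zero]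
  refine max_le (abs_nonneg _) ?_
  refine (abs_min_sub_min_le_max _ _ _ _).trans ?_
  simp

lemma clampR_nonneg {M x : ℝ} (hM : 0 ≤ M) (hx : 0 ≤ x) : 0 ≤ clampR M x := by
  unfold clampR
  exact le_max_of_le_right (le_min hx hM)

/-- Primitive of the clamped power. -/
noncomputable def primC (M : ℝ) (n : ℕ) (x : ℝ) : ℝ := ∫ t in (0:ℝ)..x, clampR M t ^ n

lemma primC_deriv (M : ℝ) (n : ℕ) (x : ℝ) : HasDerivAt (primC M n) (clampR M x ^ n) x :=
  intervalIntegral.integral_hasDerivAt_right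
    (((clampR_cont M).pow n).intervalIntegrable _ _)
    (((clampR_cont M).pow n).stronglyMeasurableAtFilter _ _) ((clampR_cont M).pow n).continuousAt

lemma primC_neg {M : ℝ} (hM : 0 ≤ M) {n : ℕ} (hn : Odd n) (x : ℝ) :
    primC M n (-x) = primC M n x := by
  unfold primC
  have h := intervalIntegral.integral_comp_neg (a := 0) (b := x) (fun t => clampR M t ^ n)
  rw [intervalIntegral.integral_symm]
  simp only [neg_zero] at h
  rw [← h, ← intervalIntegral.integral_neg]
  congr 1
  ext t
  rw [clampR_neg hM, hn.neg_pow, neg_neg]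

lemma primC_small {M : ℝ} (n : ℕ) {x : ℝ} (h0 : 0 ≤ x) (h : x ≤ M) :
    primC M n x = x ^ (n + 1) / (n + 1) := by
  unfold primC
  rw [intervalIntegral.integral_congr (g := fun t => t ^ n)]
  · rw [integral_pow]; simp
  · intro t ht
    rw [uIcc_of_le h0] at ht
    simp only
    rw [clampR_eq]
    rw [abs_le]; constructor <;> linarith [ht.1, ht.2]

lemma primC_mono {M : ℝ} (hM : 0 ≤ M) (n : ℕ) : MonotoneOn (primC M n) (Ici 0) := by
  apply monotoneOn_of_deriv_nonneg (convex_Ici 0)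
  · exact fun x _ => (primC_deriv M n x).continuousAt.continuousWithinAt
  · exact fun x _ => (primC_deriv M n x).differentiableAt.differentiableWithinAt
  · intro x hx
    rw [(primC_deriv M n x).deriv]
    rw [interior_Ici] at hx
    exact pow_nonneg (clampR_nonneg hM hx.le) _

lemma primC_abs {M : ℝ} (hM : 0 ≤ M) {n : ℕ} (hn : Odd n) (x : ℝ) :
    primC M n x = primC M n |x| := by
  rcases abs_choice x with h | h <;> rw [h]
  rw [primC_neg hM hn]

lemma primC_nonneg {M : ℝ} (hM : 0 ≤ M) {n : ℕ} (hn : Odd n) (x : ℝ) : 0 ≤ primC M n x := by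
  rw [primC_abs hM hn]
  have := primC_mono hM n (mem_Ici.2 le_rfl) (mem_Ici.2 (abs_nonneg x)) (abs_nonneg x)
  rwa [primC_small n le_rfl hM, zero_pow (by omega), zero_div] at this

lemma pow_big {M x : ℝ} {n : ℕ} (hM : (n:ℝ) + 1 ≤ M) (h : x ^ (n + 1) / (n + 1) ≤ 1 / 2)
    (hx : M ≤ x) : False := by
  have h1 : (0:ℝ) ≤ n := n.cast_nonneg
  rw [div_le_iff₀ (by positivity)] at h
  have : x ≤ x ^ (n + 1) := le_self_pow₀ (by linarith) (by omega)
  nlinarith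

lemma primC_bound {M : ℝ} {n : ℕ} (hn : Odd n) (hM : (n:ℝ) + 1 ≤ M) {x : ℝ}
    (h : primC M n x ≤ 1 / 2) : |x| ≤ M := by
  have h1 : (0:ℝ) ≤ n := n.cast_nonneg
  have hM0 : 0 ≤ M := by linarith
  by_contra! hx
  rw [primC_abs hM0 hn] at h
  have := primC_mono hM0 n (mem_Ici.2 hM0) (mem_Ici.2 (abs_nonneg x)) hx.le
  rw [primC_small n hM0 le_rfl] at this
  exact pow_big hM (this.trans h) le_rfl

lemma pow_bound {M : ℝ} {n : ℕ} (hn : Odd n) (hM : (n:ℝ) + 1 ≤ M) {x : ℝ}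
    (h : x ^ (n + 1) / (n + 1) ≤ 1 / 2) : |x| ≤ M := by
  by_contra! hx
  rw [← (hn.add_one).pow_abs] at h
  exact pow_big hM h hx.le

lemma clampR_pow_lip {M : ℝ} (hM : 0 ≤ M) (n : ℕ) (x y : ℝ) :
    |clampR M x ^ n - clampR M y ^ n| ≤ n * M ^ (n - 1) * |x - y| := by
  refine (abs_pow_sub_pow_le _ _ _).trans ?_
  have h1 := clampR_sub M x y
  have h2 : max |clampR M x| |clampR M y| ≤ M := max_le (clampR_abs hM _) (clampR_abs hM _)
  calc _ ≤ |x - y| * n * M ^ (n - 1) := by gcongr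
    _ = _ := by ring

/-- The clamped vector field. -/
noncomputable def fieldC (M : ℝ) (m n : ℕ) (p : ℝ × ℝ) : ℝ × ℝ :=
  (-clampR M p.2 ^ m, clampR M p.1 ^ n)

lemma fieldC_lip {M : ℝ} (hM : 0 ≤ M) (m n : ℕ) : ∃ K, LipschitzWith K (fieldC M m n) := by
  refine ⟨Real.toNNReal (m * M ^ (m - 1) + n * M ^ (n - 1)), ?_⟩
  refine LipschitzWith.of_dist_le_mul fun p q => ?_
  rw [Real.coe_toNNReal _ (by positivity), Prod.dist_eq]
  have a1 : |p.1 - q.1| ≤ dist p q := by rw [← Real.dist_eq]; exact le_max_left _ _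
  have a2 : |p.2 - q.2| ≤ dist p q := by rw [← Real.dist_eq]; exact le_max_right _ _
  have d := dist_nonneg (x := p) (y := q)
  refine max_le ?_ ?_
  · have := clampR_pow_lip hM m p.2 q.2
    simp only [fieldC, dist_neg_neg, Real.dist_eq]
    refine this.trans ?_
    have : 0 ≤ (n:ℝ) * M ^ (n - 1) := by positivity
    gcongr
    linarith
  · have := clampR_pow_lip hM n p.1 q.1
    simp only [fieldC, Real.dist_eq]
    refine this.trans ?_
    have : 0 ≤ (m:ℝ) * M ^ (m - 1) := by positivity
    gcongr
    linarith

lemma fieldC_bdd {M : ℝ} (hM : 0 ≤ M) (m n : ℕ) : ∃ L : NNReal, ∀ p, ‖fieldC M m n p‖ ≤ L := by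
  refine ⟨Real.toNNReal (M ^ m + M ^ n), fun p => ?_⟩
  rw [Real.coe_toNNReal _ (by positivity), Prod.norm_def]
  have h1 : 0 ≤ M ^ m := by positivity
  have h2 : 0 ≤ M ^ n := by positivity
  refine max_le ?_ ?_
  · simp only [fieldC, norm_neg, Real.norm_eq_abs, abs_pow]
    have : |clampR M p.2| ^ m ≤ M ^ m := by gcongr; exact clampR_abs hM _
    linarith
  · simp only [fieldC, Real.norm_eq_abs, abs_pow]
    have : |clampR M p.1| ^ n ≤ M ^ n := by gcongr; exact clampR_abs hM _
    linarith

lemma global_ex {v : ℝ × ℝ → ℝ × ℝ} {K L : NNReal} (hK : LipschitzWith K v)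
    (hL : ∀ p, ‖v p‖ ≤ L) (x : ℝ × ℝ) :
    ∃ γ : ℝ → ℝ × ℝ, γ 0 = x ∧ ∀ t, HasDerivAt γ (v (γ t)) t := by
  have key : ∀ N : ℕ, ∃ γ : ℝ → ℝ × ℝ, γ 0 = x ∧
      ∀ t ∈ Ioo (-((N:ℝ) + 1)) (N + 1), HasDerivAt γ (v (γ t)) t := by
    intro N
    have hN : (0:ℝ) ≤ N := N.cast_nonneg
    have hpl : IsPicardLindelof (fun _ => v)
        (tmin := -((N:ℝ) + 1)) (tmax := N + 1) ⟨0, by constructor <;> linarith⟩ x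
        (L * (N + 1)) 0 L K := by
      refine ⟨fun t _ => hK.lipschitzOnWith, fun _ _ => continuousOn_const,
        fun _ _ p _ => hL p, ?_⟩
      simp
    obtain ⟨γ, h0, h⟩ := hpl.exists_eq_forall_mem_Icc_hasDerivWithinAt₀
    exact ⟨γ, h0, fun t ht => (h t (Ioo_subset_Icc_self ht)).hasDerivAt (Icc_mem_nhds ht.1 ht.2)⟩
  choose γ h0 h using key
  have agree : ∀ N N' : ℕ, N ≤ N' → EqOn (γ N) (γ N') (Ioo (-((N:ℝ) + 1)) (N + 1)) := by
    intro N N' hNN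
    have hN : (0:ℝ) ≤ N := N.cast_nonneg
    have hN' : (N:ℝ) ≤ N' := by exact_mod_cast hNN
    refine ODE_solution_unique_of_mem_Ioo (v := fun _ => v) (s := fun _ => univ) (K := K) (t₀ := 0)
      (fun _ _ => hK.lipschitzOnWith) (by constructor <;> linarith)
      (fun t ht => ⟨h N t ht, trivial⟩) (fun t ht => ⟨h N' t ?_, trivial⟩) (by rw [h0, h0])
    constructor <;> linarith [ht.1, ht.2]
  have mem : ∀ t : ℝ, t ∈ Ioo (-((⌈|t|⌉₊:ℝ) + 1)) (⌈|t|⌉₊ + 1) := by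
    intro t
    have := Nat.le_ceil |t|
    constructor <;> linarith [neg_abs_le t, le_abs_self t]
  refine ⟨fun t => γ ⌈|t|⌉₊ t, h0 _, fun t => ?_⟩
  refine (h _ t (mem t)).congr_of_eventuallyEq ?_
  filter_upwards [Ioo_mem_nhds (mem t).1 (mem t).2] with s hs
  rcases le_total ⌈|s|⌉₊ ⌈|t|⌉₊ with hh | hh
  · exact agree _ _ hh (mem s)
  · exact (agree _ _ hh hs).symm

lemma exist_sol {m n : ℕ} (hm : Odd m) (hn : Odd n) : ∃ p : (ℝ → ℝ) × (ℝ → ℝ),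
    (∀ θ : ℝ, HasDerivAt p.1 (-(p.2 θ) ^ m) θ) ∧ (∀ θ : ℝ, HasDerivAt p.2 ((p.1 θ) ^ n) θ) ∧
      p.1 0 = 1 ∧ p.2 0 = 0 := by
  obtain ⟨M, hM⟩ : ∃ M : ℝ, M = m + n + 1 := ⟨_, rfl⟩
  have hm0 : (0:ℝ) ≤ m := m.cast_nonneg
  have hn0 : (1:ℝ) ≤ n := by exact_mod_cast hn.pos
  have hM0 : 0 ≤ M := by linarith
  obtain ⟨K, hK⟩ := fieldC_lip hM0 m n
  obtain ⟨L, hL⟩ := fieldC_bdd hM0 m n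
  obtain ⟨γ, h0, h⟩ := global_ex hK hL (1, 0)
  have d1 : ∀ t, HasDerivAt (fun t => (γ t).1) (-clampR M (γ t).2 ^ m) t := fun t => (h t).fst
  have d2 : ∀ t, HasDerivAt (fun t => (γ t).2) (clampR M (γ t).1 ^ n) t := fun t => (h t).snd
  have dE : ∀ t, HasDerivAt (fun t => primC M m (γ t).2 + primC M n (γ t).1) 0 t := by
    intro t
    refine (((primC_deriv M m _).comp t (d2 t)).add
      ((primC_deriv M n _).comp t (d1 t))).congr_deriv ?_
    ring
  have E : ∀ t, primC M m (γ t).2 + primC M n (γ t).1 ≤ 1 / 2 := by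
    intro t
    have := is_const_of_deriv_eq_zero (fun t => (dE t).differentiableAt) (fun t => (dE t).deriv) t 0
    rw [this, h0]
    simp only
    rw [primC_small m le_rfl hM0, primC_small n zero_le_one (by linarith), zero_pow (by omega),
      one_pow, zero_div, zero_add]
    exact one_div_le_one_div_of_le (by norm_num) (by linarith)
  have b1 : ∀ t, |(γ t).1| ≤ M := fun t => primC_bound hn (by linarith)
    (by linarith [E t, primC_nonneg hM0 hm (γ t).2])
  have b2 : ∀ t, |(γ t).2| ≤ M := fun t => primC_bound hm (by linarith)
    (by linarith [E t, primC_nonneg hM0 hn (γ t).1])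
  refine ⟨(fun t => (γ t).1, fun t => (γ t).2), fun t => ?_, fun t => ?_, ?_, ?_⟩
  · have := d1 t
    rwa [clampR_eq (b2 t)] at this
  · have := d2 t
    rwa [clampR_eq (b1 t)] at this
  · simp [h0]
  · simp [h0]

lemma first_int {m n : ℕ} {c s : ℝ → ℝ}
    (h1 : ∀ θ : ℝ, HasDerivAt c (-(s θ) ^ m) θ) (h2 : ∀ θ : ℝ, HasDerivAt s ((c θ) ^ n) θ)
    (hc : c 0 = 1) (hs : s 0 = 0) (t : ℝ) :
    s t ^ (m + 1) / (m + 1) + c t ^ (n + 1) / (n + 1) = 1 / (n + 1) := by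
  have hm1 : ((m:ℝ) + 1) ≠ 0 := by positivity
  have hn1 : ((n:ℝ) + 1) ≠ 0 := by positivity
  have dE : ∀ t, HasDerivAt (fun t => s t ^ (m + 1) / (m + 1) + c t ^ (n + 1) / (n + 1)) 0 t := by
    intro t
    refine ((((h2 t).pow (m + 1)).div_const ((m:ℝ) + 1)).add
      (((h1 t).pow (n + 1)).div_const ((n:ℝ) + 1))).congr_deriv ?_
    push_cast
    field_simp
    ring
  have := is_const_of_deriv_eq_zero (fun t => (dE t).differentiableAt) (fun t => (dE t).deriv) t 0
  rw [this, hc, hs]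
  simp

lemma sol_mem {m n : ℕ} (hm : Odd m) (hn : Odd n) {c s : ℝ → ℝ}
    (h1 : ∀ θ : ℝ, HasDerivAt c (-(s θ) ^ m) θ) (h2 : ∀ θ : ℝ, HasDerivAt s ((c θ) ^ n) θ)
    (hc : c 0 = 1) (hs : s 0 = 0) (t : ℝ) :
    HasDerivAt (fun t => (c t, s t)) (fieldC (m + n + 1) m n (c t, s t)) t := by
  have E := first_int h1 h2 hc hs t
  have hm0 : (0:ℝ) ≤ m := m.cast_nonneg
  have hn0 : (1:ℝ) ≤ n := by exact_mod_cast hn.pos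
  have h12 : 1 / ((n:ℝ) + 1) ≤ 1 / 2 := one_div_le_one_div_of_le (by norm_num) (by linarith)
  have p1 : 0 ≤ s t ^ (m + 1) / (m + 1) := div_nonneg (hm.add_one.pow_nonneg _) (by positivity)
  have p2 : 0 ≤ c t ^ (n + 1) / (n + 1) := div_nonneg (hn.add_one.pow_nonneg _) (by positivity)
  have b1 : |c t| ≤ (m:ℝ) + n + 1 := pow_bound hn (by linarith) (by linarith)
  have b2 : |s t| ≤ (m:ℝ) + n + 1 := pow_bound hm (by linarith) (by linarith)
  unfold fieldC
  simp only [clampR_eq b1, clampR_eq b2]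
  exact (h1 t).prodMk (h2 t)

lemma unique_sol {m n : ℕ} (hm : Odd m) (hn : Odd n) {c s c' s' : ℝ → ℝ}
    (h1 : ∀ θ : ℝ, HasDerivAt c (-(s θ) ^ m) θ) (h2 : ∀ θ : ℝ, HasDerivAt s ((c θ) ^ n) θ)
    (hc : c 0 = 1) (hs : s 0 = 0)
    (h1' : ∀ θ : ℝ, HasDerivAt c' (-(s' θ) ^ m) θ) (h2' : ∀ θ : ℝ, HasDerivAt s' ((c' θ) ^ n) θ)
    (hc' : c' 0 = 1) (hs' : s' 0 = 0) : c = c' ∧ s = s' := by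
  obtain ⟨K, hK⟩ := fieldC_lip (M := (m:ℝ) + n + 1) (by positivity) m n
  have := ODE_solution_unique_univ (v := fun _ => fieldC ((m:ℝ) + n + 1) m n)
    (s := fun _ => univ) (K := K) (t₀ := 0) (fun _ => hK.lipschitzOnWith)
    (fun t => ⟨sol_mem hm hn h1 h2 hc hs t, trivial⟩)
    (fun t => ⟨sol_mem hm hn h1' h2' hc' hs' t, trivial⟩) (by simp [hc, hc', hs, hs'])
  constructor
  · ext t; exact congrArg Prod.fst (congrFun this t)
  · ext t; exact congrArg Prod.snd (congrFun this t)

section anal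
open Filter Topology
open scoped ContDiff

lemma analytic_of_scalar {y y' : ℝ → ℝ} {f : ℂ → ℂ} {t₀ : ℝ}
    (hy : ∀ t, HasDerivAt y (y' t) t) (hf : AnalyticAt ℂ f (y t₀)) (hf0 : f (y t₀) ≠ 0)
    (hyf : ∀ᶠ t in 𝓝 t₀, (y' t : ℂ) = f (y t)) : AnalyticAt ℝ y t₀ := by
  have hyc : Continuous fun t => (y t : ℂ) :=
    Complex.continuous_ofReal.comp (continuous_iff_continuousAt.2 fun t => (hy t).continuousAt)
  -- a ball where `1 / f` is holomorphic
  have ev : ∀ᶠ z in 𝓝 (y t₀ : ℂ), AnalyticAt ℂ f z ∧ f z ≠ 0 :=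
    hf.eventually_analyticAt.and (hf.continuousAt.eventually_ne hf0)
  obtain ⟨r, hr, hball⟩ := Metric.eventually_nhds_iff_ball.1 ev
  have hdiff : DifferentiableOn ℂ (fun z => (f z)⁻¹) (Metric.ball (y t₀ : ℂ) r) := fun z hz =>
    ((hball z hz).1.differentiableAt.inv (hball z hz).2).differentiableWithinAt
  obtain ⟨P, hP⟩ := hdiff.isExactOn_ball
  have hPa : AnalyticAt ℂ P (y t₀) := by
    have : DifferentiableOn ℂ P (Metric.ball (y t₀ : ℂ) r) := fun z hz =>
      (hP z hz).differentiableAt.differentiableWithinAt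
    exact this.analyticAt (Metric.ball_mem_nhds _ hr)
  have hP0 := hP _ (Metric.mem_ball_self hr)
  have hs : HasStrictDerivAt P (f (y t₀))⁻¹ (y t₀) := by
    have := hPa.hasStrictDerivAt
    rwa [hP0.deriv] at this
  have hinv0 : (f (y t₀))⁻¹ ≠ 0 := inv_ne_zero hf0
  have hfd := hs.hasStrictFDerivAt_equiv hinv0
  have hcd : ContDiffAt ℂ ω P (y t₀) := hPa.contDiffAt
  have hn : (ω : WithTop ℕ∞) ≠ 0 := by simp
  set Q := hcd.localInverse hfd.hasFDerivAt hn with hQ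
  have hQa : AnalyticAt ℂ Q (P (y t₀)) := (hcd.to_localInverse hfd.hasFDerivAt hn).analyticAt
  have hQl : ∀ᶠ z in 𝓝 (y t₀ : ℂ), Q (P z) = z := by
    exact (hcd.toOpenPartialHomeomorph P hfd.hasFDerivAt hn).eventually_left_inverse
      (hcd.mem_toOpenPartialHomeomorph_source hfd.hasFDerivAt hn)
  -- P (y t) = t - t₀ + P (y t₀)
  have hPy : ∀ᶠ t in 𝓝 t₀, P (y t) = P (y t₀) + ((t : ℂ) - t₀) := by
    have e1 : ∀ᶠ t in 𝓝 t₀, (y t : ℂ) ∈ Metric.ball (y t₀ : ℂ) r :=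
      hyc.continuousAt.eventually (Metric.ball_mem_nhds _ hr)
    obtain ⟨δ, hδ, hb⟩ := Metric.eventually_nhds_iff_ball.1 (e1.and hyf)
    have hd : ∀ t ∈ Metric.ball t₀ δ, HasDerivAt (fun t : ℝ => P (y t) - (t : ℂ)) 0 t := by
      intro t ht
      obtain ⟨h1, h2⟩ := hb t ht
      have hyt : HasDerivAt (fun t => (y t : ℂ)) (f (y t)) t := by
        rw [← h2]; exact (hy t).ofReal_comp
      have h3 := (hP _ h1).comp t hyt
      have h4 : HasDerivAt (fun t : ℝ => (t : ℂ)) 1 t := (hasDerivAt_id t).ofReal_comp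
      refine (h3.sub h4).congr_deriv ?_
      rw [inv_mul_cancel₀ (hball _ h1).2, sub_self]
    filter_upwards [Metric.ball_mem_nhds t₀ hδ] with t ht
    have := Metric.isOpen_ball.is_const_of_deriv_eq_zero (convex_ball t₀ δ).isPreconnected
      (fun t ht => (hd t ht).differentiableAt.differentiableWithinAt)
      (fun t ht => (hd t ht).deriv) ht (Metric.mem_ball_self hδ)
    linear_combination this
  have hyQ : ∀ᶠ t : ℝ in 𝓝 t₀, (Q (P (y t₀) + ((t : ℂ) - t₀))).re = y t := by
    filter_upwards [hPy, hyc.continuousAt.eventually hQl] with t h1 h2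
    rw [← h1, h2, Complex.ofReal_re]
  refine AnalyticAt.congr ?_ hyQ
  have hofR : AnalyticAt ℝ (fun t : ℝ => (t : ℂ)) t₀ := Complex.ofRealCLM.analyticAt t₀
  have hlin : AnalyticAt ℝ (fun t : ℝ => P (y t₀) + ((t : ℂ) - t₀)) t₀ := by
    fun_prop
  have hQr : AnalyticAt ℝ Q (P (y t₀) + ((t₀ : ℂ) - t₀)) := by
    rw [sub_self, add_zero]; exact hQa.restrictScalars
  exact (Complex.reCLM.analyticAt _).comp (hQr.comp (f := fun t : ℝ => P (y t₀) + ((t : ℂ) - t₀)) hlin)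

lemma analytic_pair {c s : ℝ → ℝ} {k A B : ℝ} {n N l : ℕ} {t₀ : ℝ} (hk : k ≠ 0) (hN : Even N)
    (hN0 : N ≠ 0) (hs : ∀ t, HasDerivAt s (k * c t ^ n) t) (hcc : ContinuousAt c t₀)
    (hc : ∀ t, c t ^ N = A + B * s t ^ l) (h0 : c t₀ ≠ 0) :
    AnalyticAt ℝ s t₀ ∧ AnalyticAt ℝ c t₀ := by
  -- the sign of `c`
  obtain ⟨σ, hσ, hpos⟩ : ∃ σ : ℝ, (σ = 1 ∨ σ = -1) ∧ 0 < σ * c t₀ := by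
    rcases lt_or_gt_of_ne h0 with h | h
    · exact ⟨-1, Or.inr rfl, by linarith⟩
    · exact ⟨1, Or.inl rfl, by linarith⟩
  have hσ2 : σ * σ = 1 := by rcases hσ with h | h <;> rw [h] <;> norm_num
  have evpos : ∀ᶠ t in 𝓝 t₀, 0 < σ * c t :=
    (continuousAt_const.mul hcc).eventually (lt_mem_nhds hpos)
  set w : ℂ → ℂ := fun z => σ * ((A : ℂ) + B * z ^ l) ^ (1 / (N : ℂ)) with hw
  have hp0 : 0 < A + B * s t₀ ^ l := by
    rw [← hc]; exact hN.pow_pos h0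
  have hwa : AnalyticAt ℂ w (s t₀) := by
    have h1 : AnalyticAt ℂ (fun z : ℂ => (A : ℂ) + B * z ^ l) (s t₀) := by fun_prop
    refine analyticAt_const.mul (h1.cpow analyticAt_const ?_)
    have : (A : ℂ) + B * (s t₀ : ℂ) ^ l = ((A + B * s t₀ ^ l : ℝ) : ℂ) := by push_cast; rfl
    rw [this]
    exact Complex.ofReal_mem_slitPlane.2 hp0
  have hwc : ∀ᶠ t in 𝓝 t₀, w (s t) = c t := by
    filter_upwards [evpos] with t ht
    have e1 : (A : ℂ) + B * (s t : ℂ) ^ l = ((A + B * s t ^ l : ℝ) : ℂ) := by push_cast; rfl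
    have e2 : (1 / (N : ℂ)) = ((1 / (N : ℝ) : ℝ) : ℂ) := by push_cast; rfl
    have e3 : A + B * s t ^ l = (σ * c t) ^ N := by
      rw [← hc, mul_pow]
      rcases hσ with h | h <;> rw [h] <;> simp [hN.neg_one_pow]
    simp only [hw]
    rw [e1, e2, ← Complex.ofReal_cpow (by rw [e3]; positivity), e3, one_div,
      Real.pow_rpow_inv_natCast ht.le hN0, ← Complex.ofReal_mul, ← mul_assoc, hσ2, one_mul]
  have hsa : AnalyticAt ℝ s t₀ := by
    refine analytic_of_scalar (f := fun z => k * w z ^ n) hs (analyticAt_const.mul (hwa.pow n)) ?_ ?_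
    · rw [hwc.self_of_nhds]
      exact mul_ne_zero (by exact_mod_cast hk) (pow_ne_zero _ (by exact_mod_cast h0))
    · filter_upwards [hwc] with t ht
      rw [ht]; push_cast; rfl
  refine ⟨hsa, ?_⟩
  have : ∀ᶠ t in 𝓝 t₀, (w (s t)).re = c t := by
    filter_upwards [hwc] with t ht
    rw [ht, Complex.ofReal_re]
  refine AnalyticAt.congr ?_ this
  have h2 : AnalyticAt ℝ (fun t => (s t : ℂ)) t₀ := (Complex.ofRealCLM.analyticAt _).comp hsa
  have hwr : AnalyticAt ℝ w (s t₀) := hwa.restrictScalars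
  exact (Complex.reCLM.analyticAt _).comp (hwr.comp (f := fun t => (s t : ℂ)) h2)

end anal

lemma analytic_sol {m n : ℕ} (hm : Odd m) (hn : Odd n) {c s : ℝ → ℝ}
    (h1 : ∀ θ : ℝ, HasDerivAt c (-(s θ) ^ m) θ) (h2 : ∀ θ : ℝ, HasDerivAt s ((c θ) ^ n) θ)
    (hc : c 0 = 1) (hs : s 0 = 0) (t : ℝ) : AnalyticAt ℝ c t ∧ AnalyticAt ℝ s t := by
  have E := first_int h1 h2 hc hs
  have hm1 : ((m:ℝ) + 1) ≠ 0 := by positivity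
  have hn1 : ((n:ℝ) + 1) ≠ 0 := by positivity
  by_cases h0 : c t = 0
  · have hst : s t ≠ 0 := by
      intro h
      have := E t
      rw [h0, h] at this
      simp at this
      exact hn1 this.symm
    refine analytic_pair (k := -1) (A := (m + 1) / (n + 1)) (B := -((m + 1) / (n + 1)))
      (n := m) (N := m + 1) (l := n + 1) (by norm_num) hm.add_one (by omega)
      (fun t => by simpa using h1 t) (h2 t).continuousAt (fun t => ?_) hst
    have := E t
    field_simp at this ⊢
    linear_combination this
  · refine (analytic_pair (k := 1) (A := 1) (B := -((n + 1) / (m + 1)))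
      (n := n) (N := n + 1) (l := m + 1) (by norm_num) hn.add_one (by omega)
      (fun t => by simpa using h2 t) (h1 t).continuousAt (fun t => ?_) h0).symm
    have := E t
    field_simp at this ⊢
    linear_combination this


/-- For positive integers `α, β`, there is exactly one pair of
(everywhere differentiable) functions `Cs, Sn : ℝ → ℝ` with
`Cs' = -Sn^(2α-1)`, `Sn' = Cs^(2β-1)`, `Cs 0 = 1`, `Sn 0 = 0`;
moreover any such pair consists of real-analytic functions. -/
theorem stmt_1 (α β : ℕ) (hα : 0 < α) (hβ : 0 < β) :
    (∃! p : (ℝ → ℝ) × (ℝ → ℝ),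
      (∀ θ : ℝ, HasDerivAt p.1 (-(p.2 θ) ^ (2 * α - 1)) θ) ∧
      (∀ θ : ℝ, HasDerivAt p.2 ((p.1 θ) ^ (2 * β - 1)) θ) ∧
      p.1 0 = 1 ∧ p.2 0 = 0) ∧
    (∀ Cs Sn : ℝ → ℝ,
      (∀ θ : ℝ, HasDerivAt Cs (-(Sn θ) ^ (2 * α - 1)) θ) →
      (∀ θ : ℝ, HasDerivAt Sn ((Cs θ) ^ (2 * β - 1)) θ) →
      Cs 0 = 1 → Sn 0 = 0 →
      (∀ θ : ℝ, AnalyticAt ℝ Cs θ) ∧ (∀ θ : ℝ, AnalyticAt ℝ Sn θ)) := by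
  have hm : Odd (2 * α - 1) := ⟨α - 1, by omega⟩
  have hn : Odd (2 * β - 1) := ⟨β - 1, by omega⟩
  refine ⟨?_, fun Cs Sn h1 h2 hc hs => ⟨fun t => (analytic_sol hm hn h1 h2 hc hs t).1,
    fun t => (analytic_sol hm hn h1 h2 hc hs t).2⟩⟩
  obtain ⟨p, h1, h2, hc, hs⟩ := exist_sol hm hn
  refine ⟨p, ⟨h1, h2, hc, hs⟩, ?_⟩
  rintro q ⟨h1', h2', hc', hs'⟩
  obtain ⟨e1, e2⟩ := unique_sol hm hn h1' h2' hc' hs' h1 h2 hc hs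
  exact Prod.ext e1 e2
end

section
/- Let α and β be positive integers and let (Cs, Sn) : ℝ → ℝ × ℝ be the unique global solution of the Cauchy problem Cs' = −Sn^(2α−1), Sn' = Cs^(2β−1), Cs(0) = 1, Sn(0) = 0. Set T = (2·α^((1−2α)/(2α)) / β^(1/(2α))) · ∫₀¹ (1−t)^((1−2α)/(2α)) · t^((1−2β)/(2β)) dt (a convergent improper integral, since both exponents are strictly greater than −1). Then T > 0 and both Cs and Sn are T-periodic: Cs(θ + T) = Cs(θ) and Sn(θ + T) = Sn(θ) for all θ ∈ ℝ. -/
open Set MeasureTheory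

theorem ode_uniq (m n : ℕ) (C S D R : ℝ → ℝ)
    (hC : ∀ t, HasDerivAt C (-(S t) ^ m) t) (hS : ∀ t, HasDerivAt S ((C t) ^ n) t)
    (hD : ∀ t, HasDerivAt D (-(R t) ^ m) t) (hR : ∀ t, HasDerivAt R ((D t) ^ n) t)
    (t₀ : ℝ) (h1 : C t₀ = D t₀) (h2 : S t₀ = R t₀) (t : ℝ) : C t = D t ∧ S t = R t := by
  let v : ℝ × ℝ → ℝ × ℝ := fun p => (-(p.2) ^ m, p.1 ^ n)
  have hv : ContDiff ℝ 1 v := by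
    show ContDiff ℝ 1 (fun p : ℝ × ℝ => (-(p.2) ^ m, p.1 ^ n))
    fun_prop
  let f : ℝ → ℝ × ℝ := fun t => (C t, S t)
  let g : ℝ → ℝ × ℝ := fun t => (D t, R t)
  have hf : ∀ t, HasDerivAt f (v (f t)) t := fun t => (hC t).prodMk (hS t)
  have hg : ∀ t, HasDerivAt g (v (g t)) t := fun t => (hD t).prodMk (hR t)
  have hfc : Continuous f := continuous_iff_continuousAt.2 fun t => (hf t).continuousAt
  have hgc : Continuous g := continuous_iff_continuousAt.2 fun t => (hg t).continuousAt
  obtain ⟨A, B, Ht, Ht₀⟩ : ∃ A B, t ∈ Set.Ioo A B ∧ t₀ ∈ Set.Ioo A B := by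
    use (min (-|t|) (-|t₀|) - 1), (max |t| |t₀| + 1)
    grind
  obtain ⟨r1, hr1⟩ := ((isCompact_Icc (a := A) (b := B)).image hfc).isBounded.subset_closedBall 0
  obtain ⟨r2, hr2⟩ := ((isCompact_Icc (a := A) (b := B)).image hgc).isBounded.subset_closedBall 0
  obtain ⟨K, hK⟩ := hv.contDiffOn.exists_lipschitzOnWith (s := Metric.closedBall 0 (max r1 r2))
    one_ne_zero (convex_closedBall _ _) (isCompact_closedBall _ _)
  have := ODE_solution_unique_of_mem_Ioo (v := fun _ => v) (s := fun _ => Metric.closedBall 0 (max r1 r2))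
    (K := K) (f := f) (g := g) (fun _ _ => hK) Ht₀
    (fun t ht => ⟨hf t, Metric.closedBall_subset_closedBall (le_max_left _ _)
      (hr1 ⟨t, Ioo_subset_Icc_self ht, rfl⟩)⟩)
    (fun t ht => ⟨hg t, Metric.closedBall_subset_closedBall (le_max_right _ _)
      (hr2 ⟨t, Ioo_subset_Icc_self ht, rfl⟩)⟩)
    (Prod.ext h1 h2) Ht
  exact ⟨congrArg Prod.fst this, congrArg Prod.snd this⟩

theorem ode_periodic (m n : ℕ) (hm : Odd m) (hn : Odd n) (C S : ℝ → ℝ)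
    (hC : ∀ t, HasDerivAt C (-(S t) ^ m) t) (hS : ∀ t, HasDerivAt S ((C t) ^ n) t)
    (hS0 : S 0 = 0) (τ : ℝ) (hτ : C τ = 0) (t : ℝ) :
    C (t + 4 * τ) = C t ∧ S (t + 4 * τ) = S t := by
  have hneg : ∀ t, C (-t) = C t ∧ -S (-t) = S t := by
    intro t
    refine ode_uniq m n (fun t => C (-t)) (fun t => -S (-t)) C S ?_ ?_ hC hS 0 (by simp)
      (by simp [hS0]) t
    · intro t
      have := (hC (-t)).comp t (hasDerivAt_neg t)
      convert! this using 1
      rw [hm.neg_pow]; ring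
    · intro t
      have := ((hS (-t)).comp t (hasDerivAt_neg t)).neg
      convert! this using 1
      ring
  have hrefl : ∀ t, -C (2 * τ - t) = C t ∧ S (2 * τ - t) = S t := by
    intro t
    have hd : ∀ t : ℝ, HasDerivAt (fun t => 2 * τ - t) (-1) t := fun t =>
      (hasDerivAt_id t).const_sub (2 * τ)
    have e : 2 * τ - τ = τ := by ring
    refine ode_uniq m n (fun t => -C (2 * τ - t)) (fun t => S (2 * τ - t)) C S ?_ ?_ hC hS τ
      (by simp [e, hτ]) (by simp [e]) t
    · intro t
      have := ((hC (2 * τ - t)).comp t (hd t)).neg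
      convert! this using 1
      ring
    · intro t
      have := ((hS (2 * τ - t)).comp t (hd t))
      convert! this using 1
      rw [hn.neg_pow]; ring
  have half : ∀ t, C (t + 2 * τ) = -C t ∧ S (t + 2 * τ) = -S t := by
    intro t
    have h1 := hrefl (-t)
    have h2 := hneg t
    have e : 2 * τ - -t = t + 2 * τ := by ring
    rw [e] at h1
    constructor
    · linarith [h1.1, h2.1]
    · linarith [h1.2, h2.2]
  have e : t + 4 * τ = (t + 2 * τ) + 2 * τ := by ring
  rw [e, (half _).1, (half _).2, (half t).1, (half t).2]
  simp

theorem ode_sn_mono (n : ℕ) (C S : ℝ → ℝ) (hS : ∀ t, HasDerivAt S ((C t) ^ n) t)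
    (b : ℝ) (hpos : ∀ t ∈ Ioo 0 b, 0 < C t) : StrictMonoOn S (Icc 0 b) := by
  refine strictMonoOn_of_deriv_pos (convex_Icc _ _)
    (fun t _ => (hS t).continuousAt.continuousWithinAt) ?_
  intro t ht
  rw [interior_Icc] at ht
  rw [(hS t).deriv]
  exact pow_pos (hpos t ht) n

theorem ode_quarter (m n : ℕ) (C S : ℝ → ℝ)
    (hC : ∀ t, HasDerivAt C (-(S t) ^ m) t) (hS : ∀ t, HasDerivAt S ((C t) ^ n) t)
    (hC0 : C 0 = 1) (hS0 : S 0 = 0) :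
    ∃ τ, 0 < τ ∧ C τ = 0 ∧ ∀ t ∈ Ioo 0 τ, 0 < C t ∧ 0 < S t := by
  have hCc : Continuous C := continuous_iff_continuousAt.2 fun t => (hC t).continuousAt
  have ivt : ∀ t, 0 ≤ t → C t ≤ 0 → ∃ z ∈ Icc 0 t, C z = 0 := by
    intro t ht h
    have := intermediate_value_Icc' ht hCc.continuousOn
    exact this ⟨h, by rw [hC0]; exact zero_le_one⟩
  have hz : ∃ z, 0 ≤ z ∧ C z = 0 := by
    by_contra hcon
    push Not at hcon
    have hpos : ∀ t, 0 ≤ t → 0 < C t := by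
      intro t ht
      by_contra h
      obtain ⟨z, hz, hz'⟩ := ivt t ht (not_lt.1 h)
      exact hcon z hz.1 hz'
    have mono : ∀ b, StrictMonoOn S (Icc 0 b) := fun b =>
      ode_sn_mono n C S hS b fun t ht => hpos t ht.1.le
    have hs : 0 < S 1 := by
      have := mono 1 (left_mem_Icc.2 zero_le_one) (right_mem_Icc.2 zero_le_one) zero_lt_one
      rwa [hS0] at this
    have hsm : 0 < S 1 ^ m := pow_pos hs m
    have hd : ∀ t, HasDerivAt (fun t => C t + S 1 ^ m * t) (-(S t) ^ m + S 1 ^ m * 1) t :=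
      fun t => (hC t).add ((hasDerivAt_id t).const_mul _)
    set b := 1 + C 1 / S 1 ^ m with hb
    have hb1 : 1 ≤ b := by
      have := div_pos (hpos 1 zero_le_one) hsm
      linarith
    have anti : AntitoneOn (fun t => C t + S 1 ^ m * t) (Icc 1 b) := by
      refine antitoneOn_of_deriv_nonpos (convex_Icc _ _)
        (fun t _ => (hd t).continuousAt.continuousWithinAt)
        (fun t _ => (hd t).differentiableAt.differentiableWithinAt) ?_
      intro t ht
      rw [interior_Icc] at ht
      rw [(hd t).deriv]
      have h1 : S 1 ≤ S t := (mono t).monotoneOn ⟨zero_le_one, ht.1.le⟩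
        ⟨by linarith [ht.1], le_rfl⟩ ht.1.le
      have := pow_le_pow_left₀ hs.le h1 m
      linarith
    have := anti (left_mem_Icc.2 hb1) (right_mem_Icc.2 hb1) hb1
    have hbp := hpos b (by linarith)
    have e : S 1 ^ m * b = S 1 ^ m + C 1 := by
      rw [hb]; field_simp
    simp only at this
    rw [e] at this
    linarith
  let Z : Set ℝ := Ici 0 ∩ C ⁻¹' {0}
  have hZc : IsClosed Z := isClosed_Ici.inter (isClosed_singleton.preimage hCc)
  have hZn : Z.Nonempty := hz.imp fun z h => ⟨h.1, h.2⟩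
  have hZb : BddBelow Z := ⟨0, fun z h => h.1⟩
  have hmem : sInf Z ∈ Z := hZc.csInf_mem hZn hZb
  have hτ0 : C (sInf Z) = 0 := hmem.2
  have hτpos : 0 < sInf Z := by
    refine lt_of_le_of_ne hmem.1 fun h => ?_
    rw [← h, hC0] at hτ0
    exact one_ne_zero hτ0
  have hp : ∀ t ∈ Ioo 0 (sInf Z), 0 < C t := by
    intro t ht
    by_contra h
    obtain ⟨z, hz, hz'⟩ := ivt t ht.1.le (not_lt.1 h)
    have := csInf_le hZb (show z ∈ Z from ⟨hz.1, hz'⟩)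
    linarith [hz.2, ht.2]
  refine ⟨sInf Z, hτpos, hτ0, fun t ht => ⟨hp t ht, ?_⟩⟩
  have := ode_sn_mono n C S hS _ hp (left_mem_Icc.2 hτpos.le) (Ioo_subset_Icc_self ht) ht.1
  rwa [hS0] at this

theorem ode_energy (α β : ℕ) (hα : 0 < α) (hβ : 0 < β) (C S : ℝ → ℝ)
    (hC : ∀ t, HasDerivAt C (-(S t) ^ (2 * α - 1)) t)
    (hS : ∀ t, HasDerivAt S ((C t) ^ (2 * β - 1)) t)
    (hC0 : C 0 = 1) (hS0 : S 0 = 0) (t : ℝ) :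
    α * C t ^ (2 * β) + β * S t ^ (2 * α) = α := by
  have hd : ∀ t, HasDerivAt (fun t => α * C t ^ (2 * β) + β * S t ^ (2 * α)) 0 t := by
    intro t
    have := (((hC t).pow (2 * β)).const_mul (α : ℝ)).add (((hS t).pow (2 * α)).const_mul (β : ℝ))
    convert! this using 1
    push_cast
    ring
  have := is_const_of_deriv_eq_zero (fun t => (hd t).differentiableAt) (fun t => (hd t).deriv) t 0
  rw [this, hC0, hS0, zero_pow (by omega)]
  simp

theorem ode_integral (α β : ℕ) (hα : 0 < α) (hβ : 0 < β) (C S : ℝ → ℝ)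
    (hC : ∀ t, HasDerivAt C (-(S t) ^ (2 * α - 1)) t)
    (hS : ∀ t, HasDerivAt S ((C t) ^ (2 * β - 1)) t)
    (hC0 : C 0 = 1) (hS0 : S 0 = 0) (τ : ℝ) (hτ : 0 < τ) (hCτ : C τ = 0)
    (hpos : ∀ t ∈ Ioo 0 τ, 0 < C t ∧ 0 < S t) :
    ∫ t in (0 : ℝ)..1, (1 - t) ^ ((1 - 2 * (α : ℝ)) / (2 * (α : ℝ))) *
          t ^ ((1 - 2 * (β : ℝ)) / (2 * (β : ℝ))) =
      τ * (2 * β * ((β : ℝ) / α) ^ ((1 - 2 * (α : ℝ)) / (2 * (α : ℝ)))) := by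
  have hα' : (0 : ℝ) < α := Nat.cast_pos.2 hα
  have hβ' : (0 : ℝ) < β := Nat.cast_pos.2 hβ
  let u : ℝ → ℝ := fun t => C t ^ (2 * β)
  have hu : ∀ t, HasDerivAt u (-(2 * β * C t ^ (2 * β - 1) * S t ^ (2 * α - 1))) t := by
    intro t
    have := (hC t).pow (2 * β)
    convert! this using 1
    push_cast
    ring
  have huc : ContinuousOn u (Icc 0 τ) := fun t _ => (hu t).continuousAt.continuousWithinAt
  have hanti : StrictAntiOn u (Icc 0 τ) := by
    refine strictAntiOn_of_deriv_neg (convex_Icc _ _) huc ?_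
    intro t ht
    rw [interior_Icc] at ht
    obtain ⟨h1, h2⟩ := hpos t ht
    rw [(hu t).deriv, neg_lt_zero]
    positivity
  have hu0 : u 0 = 1 := by simp [u, hC0]
  have huτ : u τ = 0 := by
    simp only [u, hCτ]
    exact zero_pow (by omega)
  have himg : u '' Ioo 0 τ = Ioo 0 1 := by
    apply Subset.antisymm
    · rintro _ ⟨t, ht, rfl⟩
      constructor
      · rw [← huτ]
        exact hanti (Ioo_subset_Icc_self ht) (right_mem_Icc.2 hτ.le) ht.2
      · rw [← hu0]
        exact hanti (left_mem_Icc.2 hτ.le) (Ioo_subset_Icc_self ht) ht.1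
    · have := intermediate_value_Ioo' hτ.le huc
      rwa [hu0, huτ] at this
  rw [intervalIntegral.integral_of_le zero_le_one, integral_Ioc_eq_integral_Ioo, ← himg,
    integral_image_eq_integral_abs_deriv_smul measurableSet_Ioo
      (fun t _ => (hu t).hasDerivWithinAt) (hanti.injOn.mono Ioo_subset_Icc_self)]
  rw [setIntegral_congr_fun (g := fun _ => 2 * β * ((β : ℝ) / α) ^ ((1 - 2 * (α : ℝ)) / (2 * (α : ℝ))))
    measurableSet_Ioo]
  · simp [hτ.le]
  · intro t ht
    obtain ⟨h1, h2⟩ := hpos t ht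
    have hE := ode_energy α β hα hβ C S hC hS hC0 hS0 t
    have e1 : 1 - u t = (β : ℝ) / α * S t ^ (2 * α) := by
      simp only [u]
      field_simp
      linarith
    have key : ∀ (k : ℕ) (x : ℝ), 0 < k → 0 < x →
        (x ^ (2 * k)) ^ ((1 - 2 * (k : ℝ)) / (2 * (k : ℝ))) = (x ^ (2 * k - 1))⁻¹ := by
      intro k x hk hx
      have hk' : (0 : ℝ) < k := Nat.cast_pos.2 hk
      rw [← Real.rpow_natCast x (2 * k), ← Real.rpow_mul hx.le, ← Real.rpow_natCast x (2 * k - 1),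
        ← Real.rpow_neg hx.le]
      congr 1
      rw [Nat.cast_sub (by omega)]
      push_cast
      field_simp
      ring
    have e2 := key α (S t) hα h2
    have e3 := key β (C t) hβ h1
    simp only [smul_eq_mul]
    rw [e1, Real.mul_rpow (by positivity) (by positivity), e2]
    simp only [u]
    rw [e3, abs_neg, abs_of_pos (by positivity)]
    field_simp


/-- Let `(Cs, Sn)` be the (unique global) solution of the Cauchy problem
`Cs' = -Sn^(2α-1)`, `Sn' = Cs^(2β-1)`, `Cs 0 = 1`, `Sn 0 = 0`, and let
`T = (2·α^((1-2α)/(2α)) / β^(1/(2α))) · ∫₀¹ (1-t)^((1-2α)/(2α)) · t^((1-2β)/(2β)) dt`.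
Then `T > 0` and both `Cs` and `Sn` are `T`-periodic. -/
theorem stmt_2 (α β : ℕ) (hα : 0 < α) (hβ : 0 < β) (Cs Sn : ℝ → ℝ)
    (hCs : ∀ θ : ℝ, HasDerivAt Cs (-(Sn θ) ^ (2 * α - 1)) θ)
    (hSn : ∀ θ : ℝ, HasDerivAt Sn ((Cs θ) ^ (2 * β - 1)) θ)
    (hCs0 : Cs 0 = 1) (hSn0 : Sn 0 = 0)
    (T : ℝ)
    (hT : T = 2 * (α : ℝ) ^ ((1 - 2 * (α : ℝ)) / (2 * (α : ℝ))) /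
        (β : ℝ) ^ (1 / (2 * (α : ℝ))) *
        ∫ t in (0 : ℝ)..1,
          (1 - t) ^ ((1 - 2 * (α : ℝ)) / (2 * (α : ℝ))) *
          t ^ ((1 - 2 * (β : ℝ)) / (2 * (β : ℝ)))) :
    0 < T ∧ ∀ θ : ℝ, Cs (θ + T) = Cs θ ∧ Sn (θ + T) = Sn θ := by
  obtain ⟨τ, hτ, hCτ, hpos⟩ := ode_quarter (2 * α - 1) (2 * β - 1) Cs Sn hCs hSn hCs0 hSn0
  have hI := ode_integral α β hα hβ Cs Sn hCs hSn hCs0 hSn0 τ hτ hCτ hpos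
  have hα' : (0 : ℝ) < α := Nat.cast_pos.2 hα
  have hβ' : (0 : ℝ) < β := Nat.cast_pos.2 hβ
  have hT4 : T = 4 * τ := by
    rw [hT, hI, Real.div_rpow hβ'.le hα'.le]
    have e : (β : ℝ) ^ ((1 - 2 * (α : ℝ)) / (2 * (α : ℝ))) =
        (β : ℝ) ^ (1 / (2 * (α : ℝ))) / β := by
      rw [← Real.rpow_sub_one hβ'.ne']
      congr 1
      field_simp
    rw [e]
    have p1 : 0 < (β : ℝ) ^ (1 / (2 * (α : ℝ))) := Real.rpow_pos_of_pos hβ' _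
    have p2 : 0 < (α : ℝ) ^ ((1 - 2 * (α : ℝ)) / (2 * (α : ℝ))) := Real.rpow_pos_of_pos hα' _
    generalize (β : ℝ) ^ (1 / (2 * (α : ℝ))) = p at *
    generalize (α : ℝ) ^ ((1 - 2 * (α : ℝ)) / (2 * (α : ℝ))) = q at *
    field_simp
    ring
  refine ⟨by rw [hT4]; positivity, fun θ => ?_⟩
  rw [hT4]
  exact ode_periodic (2 * α - 1) (2 * β - 1) ⟨α - 1, by omega⟩ ⟨β - 1, by omega⟩ Cs Sn hCs hSn
    hSn0 τ hCτ θ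
end

section
/- Let α and β be positive integers and let (Cs, Sn) : ℝ → ℝ × ℝ be the unique global solution of the Cauchy problem Cs' = −Sn^(2α−1), Sn' = Cs^(2β−1), Cs(0) = 1, Sn(0) = 0. Then for every θ ∈ ℝ: (Cs(θ), Sn(θ)) ≠ (0, 0); moreover Cs(θ)^(2β) ≤ 1 and Sn(θ)^(2α) ≤ α/β. -/
/-- Let `(Cs, Sn)` be the (unique global) solution of the Cauchy problem
`Cs' = -Sn^(2α-1)`, `Sn' = Cs^(2β-1)`, `Cs 0 = 1`, `Sn 0 = 0`. Then for every `θ`,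
`(Cs θ, Sn θ) ≠ (0, 0)`, `Cs θ ^ (2β) ≤ 1` and `Sn θ ^ (2α) ≤ α / β`. -/
theorem stmt_3 (α β : ℕ) (hα : 0 < α) (hβ : 0 < β) (Cs Sn : ℝ → ℝ)
    (hCs : ∀ θ : ℝ, HasDerivAt Cs (-(Sn θ) ^ (2 * α - 1)) θ)
    (hSn : ∀ θ : ℝ, HasDerivAt Sn ((Cs θ) ^ (2 * β - 1)) θ)
    (hCs0 : Cs 0 = 1) (hSn0 : Sn 0 = 0) :
    ∀ θ : ℝ, (Cs θ, Sn θ) ≠ ((0 : ℝ), (0 : ℝ)) ∧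
      (Cs θ) ^ (2 * β) ≤ 1 ∧ (Sn θ) ^ (2 * α) ≤ (α : ℝ) / (β : ℝ) := by
  have key : ∀ θ, (β : ℝ) * Sn θ ^ (2 * α) + (α : ℝ) * Cs θ ^ (2 * β) = α := by
    have hd : ∀ θ, HasDerivAt
        (fun θ => (β : ℝ) * Sn θ ^ (2 * α) + (α : ℝ) * Cs θ ^ (2 * β)) 0 θ := by
      intro θ
      have h := (((hSn θ).fun_pow (2 * α)).const_mul (β : ℝ)).add
        (((hCs θ).fun_pow (2 * β)).const_mul (α : ℝ))
      refine h.congr_deriv ?_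
      push_cast
      ring
    intro θ
    have h := is_const_of_deriv_eq_zero (fun x => (hd x).differentiableAt)
      (fun x => (hd x).deriv) θ 0
    simp only [hCs0, hSn0] at h
    rw [h, zero_pow (by omega)]
    simp
  intro θ
  have hk := key θ
  have ha : (0 : ℝ) < α := by exact_mod_cast hα
  have hb : (0 : ℝ) < β := by exact_mod_cast hβ
  have h1 : 0 ≤ Sn θ ^ (2 * α) := (even_two_mul α).pow_nonneg _
  have h2 : 0 ≤ Cs θ ^ (2 * β) := (even_two_mul β).pow_nonneg _
  refine ⟨?_, ?_, ?_⟩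
  · intro h
    obtain ⟨hc, hs⟩ := Prod.mk.inj h
    rw [hc, hs, zero_pow (by omega), zero_pow (by omega)] at hk
    linarith
  · have := mul_nonneg hb.le h1
    exact le_of_mul_le_mul_left (by linarith) ha
  · rw [le_div_iff₀ hb]
    have := mul_nonneg ha.le h2
    linarith
end

section
/- Let S ⊆ ℤ² be a finite set and a, b : ℤ² → ℝ coefficient functions with a_{m,n} = 0 whenever m < −1 or n ≤ −1, and b_{m,n} = 0 whenever m ≤ −1 or n < −1. Let P(x,y) = Σ_{(m,n)∈S} a_{m,n}·x^(m+1)·y^n and Q(x,y) = Σ_{(m,n)∈S} b_{m,n}·x^m·y^(n+1) be the components of the vector field X written in the logarithmic basis. Let α, β be positive integers, let I ⊆ ℝ be an open interval, and let x, y : I → ℝ be differentiable with x(t) > 0, x'(t) = P(x(t), y(t)) and y'(t) = Q(x(t), y(t)) for all t ∈ I. Define u(t) = y(t)·x(t)^(−β/α) and v(t) = x(t)^(−1/α), using real powers of the positive number x(t). Then for every t ∈ I: u'(t) = Σ_{(m,n)∈S} (b_{m,n} − (β/α)·a_{m,n})·u(t)^(n+1)·v(t)^(−(αm+βn)) and v'(t)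 = −(1/α)·Σ_{(m,n)∈S} a_{m,n}·u(t)^n·v(t)^(1−(αm+βn)), where powers of v(t) > 0 are integer powers and all powers of u(t) occurring with nonzero coefficient have nonnegative integer exponent. -/
/-- Poincaré–Lyapunov chart in the `x`-positive direction. If `(x, y)` solves the
polynomial system given in the logarithmic basis by coefficients `a, b` supported on `S`, with
`x > 0` on an open interval `I`, then `u = y·x^(-β/α)` and `v = x^(-1/α)` satisfy the stated
differential equations. -/
theorem stmt_5 (S : Finset (ℤ × ℤ)) (a b : ℤ × ℤ → ℝ)
    (ha : ∀ m n : ℤ, m < -1 ∨ n ≤ -1 → a (m, n) = 0)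
    (hb : ∀ m n : ℤ, m ≤ -1 ∨ n < -1 → b (m, n) = 0)
    (α β : ℕ) (hα : 0 < α) (hβ : 0 < β)
    (I : Set ℝ) (hIopen : IsOpen I) (hIconn : I.OrdConnected)
    (x y u v : ℝ → ℝ)
    (hxpos : ∀ t ∈ I, 0 < x t)
    (hx : ∀ t ∈ I, HasDerivAt x (∑ p ∈ S, a p * x t ^ (p.1 + 1) * y t ^ p.2) t)
    (hy : ∀ t ∈ I, HasDerivAt y (∑ p ∈ S, b p * x t ^ p.1 * y t ^ (p.2 + 1)) t)
    (hu : ∀ t ∈ I, u t = y t * x t ^ (-(β : ℝ) / (α : ℝ)))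
    (hv : ∀ t ∈ I, v t = x t ^ (-(1 : ℝ) / (α : ℝ))) :
    ∀ t ∈ I,
      HasDerivAt u (∑ p ∈ S, (b p - (β : ℝ) / (α : ℝ) * a p) * u t ^ (p.2 + 1) *
        v t ^ (-((α : ℤ) * p.1 + (β : ℤ) * p.2))) t ∧
      HasDerivAt v (-(1 / (α : ℝ)) * ∑ p ∈ S, a p * u t ^ p.2 *
        v t ^ (1 - ((α : ℤ) * p.1 + (β : ℤ) * p.2))) t := by
  intro t ht
  have hαr : (α : ℝ) ≠ 0 := by positivity
  have hX := hxpos t ht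
  have hw : 0 < v t := by rw [hv t ht]; positivity
  have hw0 : v t ≠ 0 := hw.ne'
  have hxw : x t = v t ^ (-(α : ℤ)) := by
    rw [hv t ht, ← Real.rpow_intCast, ← Real.rpow_mul hX.le]
    have : -(1 : ℝ) / (α : ℝ) * ((-(α : ℤ) : ℤ) : ℝ) = 1 := by
      push_cast; field_simp
    rw [this, Real.rpow_one]
  have hpw : ∀ k : ℤ, x t ^ ((k : ℝ) / (α : ℝ)) = v t ^ (-k) := by
    intro k
    rw [hv t ht, ← Real.rpow_intCast, ← Real.rpow_mul hX.le]
    congr 1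
    push_cast; field_simp
  have hnhds : I ∈ nhds t := hIopen.mem_nhds ht
  have e1 : x t ^ (-(β : ℝ) / (α : ℝ)) = v t ^ (β : ℤ) := by
    have := hpw (-(β : ℤ))
    push_cast at this
    rw [this, neg_neg]
  have e2 : x t ^ (-(β : ℝ) / (α : ℝ) - 1) = v t ^ ((β : ℤ) + α) := by
    have := hpw (-(β : ℤ) - α)
    push_cast at this
    rw [show -(β : ℝ) / (α : ℝ) - 1 = (-(β : ℝ) - α) / α by field_simp, this]
    congr 1; ring
  have e3 : x t ^ (-(1 : ℝ) / (α : ℝ) - 1) = v t ^ (1 + (α : ℤ)) := by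
    have := hpw (-1 - (α : ℤ))
    push_cast at this
    rw [show -(1 : ℝ) / (α : ℝ) - 1 = (-(1 : ℝ) - α) / α by field_simp, this]
    congr 1; ring
  have hyu : y t = u t * v t ^ (-(β : ℤ)) := by
    rw [hu t ht, e1, mul_assoc, ← zpow_add₀ hw0]; simp
  have ha' : ∀ p : ℤ × ℤ, a p = 0 ∨ 0 ≤ p.2 := by
    rintro ⟨m, n⟩
    by_cases h : n ≤ -1
    · exact Or.inl (ha m n (Or.inr h))
    · right; simp only; omega
  constructor
  · have hd := (hy t ht).mul ((hx t ht).rpow_const (p := -(β : ℝ) / (α : ℝ)) (Or.inl hX.ne'))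
    have hd2 := hd.congr_of_eventuallyEq (f₁ := u)
      (by filter_upwards [hnhds] with s hs using hu s hs)
    refine hd2.congr_deriv (Eq.symm ?_)
    rw [e1, e2, Finset.sum_mul, Finset.sum_mul, Finset.sum_mul, Finset.mul_sum,
      ← Finset.sum_add_distrib]
    refine Finset.sum_congr rfl fun p _ => ?_
    have hB : x t ^ p.1 * y t ^ (p.2 + 1) * v t ^ (β : ℤ)
        = u t ^ (p.2 + 1) * v t ^ (-((α : ℤ) * p.1 + (β : ℤ) * p.2)) := by
      rw [hyu, hxw, mul_zpow, ← zpow_mul, ← zpow_mul]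
      rw [show -((α : ℤ) * p.1 + (β : ℤ) * p.2)
        = -(α : ℤ) * p.1 + -(β : ℤ) * (p.2 + 1) + β by ring, zpow_add₀ hw0, zpow_add₀ hw0]
      ring
    have hA : a p * (y t * (x t ^ (p.1 + 1) * y t ^ p.2 * v t ^ ((β : ℤ) + α)))
        = a p * (x t ^ p.1 * y t ^ (p.2 + 1) * v t ^ (β : ℤ)) := by
      rcases ha' p with h | h
      · simp [h]
      · have h1 : y t ^ (p.2 + 1) = y t ^ p.2 * y t := by
          rw [zpow_add' (by right; left; omega), zpow_one]
        have h2 : x t * v t ^ (α : ℤ) = 1 := by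
          rw [hxw, ← zpow_add₀ hw0]; simp
        rw [h1, zpow_add₀ hX.ne', zpow_add₀ hw0, zpow_one]
        linear_combination a p * y t * x t ^ p.1 * y t ^ p.2 * v t ^ (β : ℤ) * h2
    linear_combination (-b p + (β : ℝ) / α * a p) * hB + (β : ℝ) / α * hA
  · have hd := (hx t ht).rpow_const (p := -(1 : ℝ) / (α : ℝ)) (Or.inl hX.ne')
    have hd2 := hd.congr_of_eventuallyEq (f₁ := v)
      (by filter_upwards [hnhds] with s hs using hv s hs)
    refine hd2.congr_deriv (Eq.symm ?_)
    rw [e3, Finset.sum_mul, Finset.sum_mul, Finset.mul_sum]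
    refine Finset.sum_congr rfl fun p _ => ?_
    have hB : x t ^ (p.1 + 1) * y t ^ p.2 * v t ^ (1 + (α : ℤ))
        = u t ^ p.2 * v t ^ (1 - ((α : ℤ) * p.1 + (β : ℤ) * p.2)) := by
      rw [hyu, hxw, mul_zpow, ← zpow_mul, ← zpow_mul]
      rw [show 1 - ((α : ℤ) * p.1 + (β : ℤ) * p.2)
        = -(α : ℤ) * (p.1 + 1) + -(β : ℤ) * p.2 + (1 + α) by ring,
        zpow_add₀ hw0 (_ + _) (1 + (α : ℤ)), zpow_add₀ hw0 (_ * _) (_ * _)]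
      ring
    linear_combination (1 / (α : ℝ) * a p) * hB
end

section
/- Let S ⊆ ℤ² be a finite set and a, b : ℤ² → ℝ coefficient functions with a_{m,n} = 0 whenever m < −1 or n ≤ −1, and b_{m,n} = 0 whenever m ≤ −1 or n < −1. Let P(x,y) = Σ_{(m,n)∈S} a_{m,n}·x^(m+1)·y^n and Q(x,y) = Σ_{(m,n)∈S} b_{m,n}·x^m·y^(n+1). Let α, β be positive integers, let I ⊆ ℝ be an open interval, and let x, y : I → ℝ be differentiable with y(t) > 0, x'(t) = P(x(t), y(t)) and y'(t) = Q(x(t), y(t)) for all t ∈ I. Define u(t) = x(t)·y(t)^(−α/β) and v(t) = y(t)^(−1/β), using real powers of the positive number y(t). Then for every t ∈ I: u'(t) = Σ_{(m,n)∈S} (a_{m,n} − (α/β)·b_{m,n})·u(t)^(m+1)·v(t)^(−(αm+βn)) and v'(t) = −(1/β)·Σ_{(m,n)∈S} b_{m,n}·u(t)^m·v(t)^(1−(αm+βn)), where powers of v(t) > 0 are integer powers and all powers of u(t) occurring with nonzero coefficient have nonnegative integer exponent. -/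
/-- Poincaré–Lyapunov chart in the `y`-positive direction. If `(x, y)` solves the
polynomial system given in the logarithmic basis by coefficients `a, b` supported on `S`, with
`y > 0` on an open interval `I`, then `u = x·y^(-α/β)` and `v = y^(-1/β)` satisfy the stated
differential equations. -/
theorem stmt_6 (S : Finset (ℤ × ℤ)) (a b : ℤ × ℤ → ℝ)
    (ha : ∀ m n : ℤ, m < -1 ∨ n ≤ -1 → a (m, n) = 0)
    (hb : ∀ m n : ℤ, m ≤ -1 ∨ n < -1 → b (m, n) = 0)
    (α β : ℕ) (hα : 0 < α) (hβ : 0 < β)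
    (I : Set ℝ) (hIopen : IsOpen I) (hIconn : I.OrdConnected)
    (x y u v : ℝ → ℝ)
    (hypos : ∀ t ∈ I, 0 < y t)
    (hx : ∀ t ∈ I, HasDerivAt x (∑ p ∈ S, a p * x t ^ (p.1 + 1) * y t ^ p.2) t)
    (hy : ∀ t ∈ I, HasDerivAt y (∑ p ∈ S, b p * x t ^ p.1 * y t ^ (p.2 + 1)) t)
    (hu : ∀ t ∈ I, u t = x t * y t ^ (-(α : ℝ) / (β : ℝ)))
    (hv : ∀ t ∈ I, v t = y t ^ (-(1 : ℝ) / (β : ℝ))) :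
    ∀ t ∈ I,
      HasDerivAt u (∑ p ∈ S, (a p - (α : ℝ) / (β : ℝ) * b p) * u t ^ (p.1 + 1) *
        v t ^ (-((α : ℤ) * p.1 + (β : ℤ) * p.2))) t ∧
      HasDerivAt v (-(1 / (β : ℝ)) * ∑ p ∈ S, b p * u t ^ p.1 *
        v t ^ (1 - ((α : ℤ) * p.1 + (β : ℤ) * p.2))) t := by
  intro t ht
  have hy0 := hypos t ht
  have hβ' : (β : ℝ) ≠ 0 := by exact_mod_cast hβ.ne'
  have hw : 0 < v t := by rw [hv t ht]; exact Real.rpow_pos_of_pos hy0 _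
  have hw0 : v t ≠ 0 := hw.ne'
  have hyα : y t ^ (-(α : ℝ) / (β : ℝ)) = v t ^ (α : ℤ) := by
    rw [hv t ht, zpow_natCast, ← Real.rpow_natCast, ← Real.rpow_mul hy0.le]
    congr 1; ring
  have hyv : y t = v t ^ (-(β : ℤ)) := by
    rw [hv t ht, zpow_neg, zpow_natCast, ← Real.rpow_natCast, ← Real.rpow_mul hy0.le,
      div_mul_cancel₀ _ hβ', Real.rpow_neg_one, inv_inv]
  have hxu : x t = u t * v t ^ (-(α : ℤ)) := by
    rw [hu t ht, hyα, mul_assoc, ← zpow_add₀ hw0]; simp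
  have hxz : ∀ k : ℤ, x t ^ k = u t ^ k * v t ^ (-(α : ℤ) * k) := by
    intro k; rw [hxu, mul_zpow, ← zpow_mul]
  have hyz : ∀ k : ℤ, y t ^ k = v t ^ (-(β : ℤ) * k) := by
    intro k; rw [hyv, ← zpow_mul]
  have hyinv : (y t)⁻¹ = v t ^ (β : ℤ) := by rw [hyv, zpow_neg, inv_inv]
  have hI : I ∈ nhds t := hIopen.mem_nhds ht
  have hbm : ∀ p : ℤ × ℤ, b p * u t * u t ^ p.1 = b p * u t ^ (p.1 + 1) := by
    rintro ⟨m, n⟩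
    by_cases hm : m ≤ -1
    · rw [hb m n (Or.inl hm)]; simp
    · have : u t ^ (m + 1) = u t ^ m * u t := by
        rw [zpow_add' (by right; left; omega), zpow_one]
      simp only [this]; ring
  constructor
  · have h1 := (hx t ht).mul
      ((hy t ht).rpow_const (p := -(α : ℝ) / (β : ℝ)) (Or.inl hy0.ne'))
    have h2 := h1.congr_of_eventuallyEq (f₁ := u) (by
      filter_upwards [hI] with s hs
      exact hu s hs)
    refine h2.congr_deriv ?_
    rw [Real.rpow_sub_one hy0.ne', div_eq_mul_inv (y t ^ _), hyα, hyinv]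
    simp only [Finset.sum_mul, Finset.mul_sum]
    rw [← Finset.sum_add_distrib]
    refine Finset.sum_congr rfl fun p _ => ?_
    rw [hxz, hxz, hyz, hyz]
    have e1 : v t ^ (-((α : ℤ) * p.1 + (β : ℤ) * p.2)) =
        v t ^ (-(α : ℤ) * (p.1 + 1)) * v t ^ (-(β : ℤ) * p.2) * v t ^ (α : ℤ) := by
      rw [← zpow_add₀ hw0, ← zpow_add₀ hw0]; congr 1; ring
    have e2 : v t ^ (-((α : ℤ) * p.1 + (β : ℤ) * p.2)) =
        v t ^ (-(α : ℤ)) * v t ^ (-(α : ℤ) * p.1) * v t ^ (-(β : ℤ) * (p.2 + 1)) *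
          v t ^ (α : ℤ) * v t ^ (β : ℤ) := by
      simp only [← zpow_add₀ hw0]; congr 1; ring
    have e3 := hbm p
    rw [hxu]
    set E := v t ^ (-((α : ℤ) * p.1 + (β : ℤ) * p.2)) with hE
    linear_combination (-a p * u t ^ (p.1 + 1)) * e1 +
      ((α : ℝ) / β * (b p * u t * u t ^ p.1)) * e2 - ((α : ℝ) / β * E) * e3
  · have h1 := (hy t ht).rpow_const (p := -(1 : ℝ) / (β : ℝ)) (Or.inl hy0.ne')
    have h2 := h1.congr_of_eventuallyEq (f₁ := v) (by
      filter_upwards [hI] with s hs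
      exact hv s hs)
    refine h2.congr_deriv ?_
    rw [Real.rpow_sub_one hy0.ne', div_eq_mul_inv (y t ^ _), ← hv t ht, hyinv]
    simp only [Finset.sum_mul, Finset.mul_sum]
    refine Finset.sum_congr rfl fun p _ => ?_
    rw [hxz, hyz]
    have e1 : v t ^ (1 - ((α : ℤ) * p.1 + (β : ℤ) * p.2)) =
        v t ^ (-(α : ℤ) * p.1) * v t ^ (-(β : ℤ) * (p.2 + 1)) * v t * v t ^ (β : ℤ) := by
      rw [← zpow_add₀ hw0, ← zpow_add_one₀ hw0, ← zpow_add₀ hw0]; congr 1; ring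
    rw [e1]; ring
end

section
/- Let γ ⊆ ℤ² be a finite set, a, b : ℤ² → ℝ, and define P_γ(x,y) = Σ_{(m,n)∈γ} a_{m,n}·x^(m+1)·y^n and Q_γ(x,y) = Σ_{(m,n)∈γ} b_{m,n}·x^m·y^(n+1), as functions on (ℝ\{0})² using integer (zpow) powers. Assume that P_γ and Q_γ have no common zero in (ℝ\{0})², i.e. there is no (x,y) with x ≠ 0 and y ≠ 0 such that P_γ(x,y) = 0 and Q_γ(x,y) = 0. Let β₁ ∈ ℤ. Then for every ū ∈ ℝ\{0} satisfying Σ_{(m,n)∈γ} (b_{m,n} − β₁·a_{m,n})·ū^(n+1) = 0, one has Σ_{(m,n)∈γ} a_{m,n}·ū^n ≠ 0 (powers of ū being integer powers of a nonzero real). -/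
/-- If the quasi-homogeneous component `X_γ = (P_γ, Q_γ)` (logarithmic basis,
coefficients `a, b` on a finite set `γ`) has no singularity in `(ℝ \ {0})²`, then at every
zero `ū ≠ 0` of `∑ (b - β₁ a) ū^(n+1)` one has `∑ a ū^n ≠ 0`. -/
theorem stmt_8 (γ : Finset (ℤ × ℤ)) (a b : ℤ × ℤ → ℝ) (β₁ : ℤ)
    (hnd : ¬ ∃ x y : ℝ, x ≠ 0 ∧ y ≠ 0 ∧
      (∑ p ∈ γ, a p * x ^ (p.1 + 1) * y ^ p.2) = 0 ∧
      (∑ p ∈ γ, b p * x ^ p.1 * y ^ (p.2 + 1)) = 0) :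
    ∀ u : ℝ, u ≠ 0 →
      (∑ p ∈ γ, (b p - (β₁ : ℝ) * a p) * u ^ (p.2 + 1)) = 0 →
      (∑ p ∈ γ, a p * u ^ p.2) ≠ 0 := by
  intro u hu h hA
  refine hnd ⟨1, u, one_ne_zero, hu, by simpa using hA, ?_⟩
  have e : (∑ p ∈ γ, (b p - (β₁ : ℝ) * a p) * u ^ (p.2 + 1)) =
      (∑ p ∈ γ, b p * (1 : ℝ) ^ p.1 * u ^ (p.2 + 1)) -
        (β₁ : ℝ) * u * ∑ p ∈ γ, a p * u ^ p.2 := by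
    rw [Finset.mul_sum, ← Finset.sum_sub_distrib]
    refine Finset.sum_congr rfl fun p _ => ?_
    rw [one_zpow, zpow_add_one₀ hu]
    ring
  rw [h, hA, mul_zero, sub_zero] at e
  exact e.symm
end

section
/- Let α and β be positive integers and let (Cs, Sn) : ℝ → ℝ × ℝ be the unique global solution of the Cauchy problem Cs' = −Sn^(2α−1), Sn' = Cs^(2β−1), Cs(0) = 1, Sn(0) = 0. Let P, Q : ℝ² → ℝ be functions whose only common zero is the origin, i.e. P(x,y) = 0 and Q(x,y) = 0 imply (x,y) = (0,0). Then for every θ ∈ ℝ satisfying Cs(θ)·Q(Cs(θ), Sn(θ)) − (β/α)·Sn(θ)·P(Cs(θ), Sn(θ)) = 0, one has Cs(θ)^(2β−1)·P(Cs(θ), Sn(θ)) + Sn(θ)^(2α−1)·Q(Cs(θ), Sn(θ)) ≠ 0. -/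
/-- Let `(Cs, Sn)` be the (unique global) solution of the Cauchy problem
`Cs' = -Sn^(2α-1)`, `Sn' = Cs^(2β-1)`, `Cs 0 = 1`, `Sn 0 = 0`, and let `P, Q` have the origin
as only common zero. Then at every `θ` where
`Cs θ · Q(Cs θ, Sn θ) - (β/α) · Sn θ · P(Cs θ, Sn θ) = 0`, the radial eigenvalue quantity
`Cs θ^(2β-1) · P(Cs θ, Sn θ) + Sn θ^(2α-1) · Q(Cs θ, Sn θ)` is nonzero. -/
theorem stmt_9 (α β : ℕ) (hα : 0 < α) (hβ : 0 < β) (Cs Sn : ℝ → ℝ)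
    (hCs : ∀ θ : ℝ, HasDerivAt Cs (-(Sn θ) ^ (2 * α - 1)) θ)
    (hSn : ∀ θ : ℝ, HasDerivAt Sn ((Cs θ) ^ (2 * β - 1)) θ)
    (hCs0 : Cs 0 = 1) (hSn0 : Sn 0 = 0)
    (P Q : ℝ → ℝ → ℝ)
    (hPQ : ∀ x y : ℝ, P x y = 0 → Q x y = 0 → x = 0 ∧ y = 0) :
    ∀ θ : ℝ,
      Cs θ * Q (Cs θ) (Sn θ) - (β : ℝ) / (α : ℝ) * Sn θ * P (Cs θ) (Sn θ) = 0 →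
      Cs θ ^ (2 * β - 1) * P (Cs θ) (Sn θ) + Sn θ ^ (2 * α - 1) * Q (Cs θ) (Sn θ) ≠ 0 := by
  intro θ h1 h2
  obtain ⟨a, rfl⟩ : ∃ a, α = a + 1 := ⟨α - 1, by omega⟩
  obtain ⟨b, rfl⟩ : ∃ b, β = b + 1 := ⟨β - 1, by omega⟩
  have ea : 2 * (a + 1) - 1 = 2 * a + 1 := by omega
  have eb : 2 * (b + 1) - 1 = 2 * b + 1 := by omega
  rw [ea] at hCs h2
  rw [eb] at hSn h2
  have hd : ∀ t : ℝ, HasDerivAt (fun t => ((b + 1 : ℕ) : ℝ) * Sn t ^ (2 * a + 2)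
      + ((a + 1 : ℕ) : ℝ) * Cs t ^ (2 * b + 2)) 0 t := by
    intro t
    have := (((hSn t).fun_pow (2 * a + 2)).const_mul ((b + 1 : ℕ) : ℝ)).fun_add
      (((hCs t).fun_pow (2 * b + 2)).const_mul ((a + 1 : ℕ) : ℝ))
    refine this.congr_deriv ?_
    have e1 : 2 * a + 2 - 1 = 2 * a + 1 := by omega
    have e2 : 2 * b + 2 - 1 = 2 * b + 1 := by omega
    rw [e1, e2]
    push_cast
    ring
  have hc := is_const_of_deriv_eq_zero (fun t => (hd t).differentiableAt)
    (fun t => (hd t).deriv) θ 0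
  simp only [hCs0, hSn0] at hc
  rw [zero_pow (by omega), one_pow] at hc
  generalize hc' : Cs θ = c at *
  generalize hs' : Sn θ = s at *
  have hA : (((a + 1 : ℕ) : ℝ)) ≠ 0 := by positivity
  generalize ((a + 1 : ℕ) : ℝ) = A at *
  generalize ((b + 1 : ℕ) : ℝ) = B at *
  have h3 : A * (c * Q c s) = B * s * P c s := by
    field_simp at h1
    linarith
  have hP : A * P c s = 0 := by
    linear_combination (-P c s) * hc + A * c * h2 - s ^ (2 * a + 1) * h3
  have hQ : A * Q c s = 0 := by
    linear_combination (-Q c s) * hc + B * s * h2 + c ^ (2 * b + 1) * h3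
  obtain ⟨rfl, rfl⟩ := hPQ c s ((mul_eq_zero.mp hP).resolve_left hA)
    ((mul_eq_zero.mp hQ).resolve_left hA)
  rw [zero_pow (by omega), zero_pow (by omega)] at hc
  apply hA
  linarith
end

section
/- Let S ⊆ ℤ² be a finite nonempty set, let α, β be positive integers, and set δ = max_{(m,n)∈S} (α·m + β·n). Define the affine map T : ℝ² → ℝ² by T(m, n) = (m, δ − α·m − β·n). Let α', β' be positive integers with α·β' − β·α' > 0. Then T restricts to a bijection from the set F = {p ∈ conv(S) : α'·p₁ + β'·p₂ = max_{q∈conv(S)} (α'·q₁ + β'·q₂)} onto the set F' = {p ∈ conv(T(S)) : (α·β' − β·α')·p₁ + β'·p₂ = min_{q∈conv(T(S))} ((α·β' − β·α')·q₁ + β'·q₂)}; here conv denotes the convex hull in ℝ², and the linear functional defining F' has both coefficients strictly positive. -/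
/-- Effect of the Poincaré–Lyapunov compactification in the positive
`y`-direction on the Newton polytope: the affine map `T(m,n) = (m, δ - αm - βn)` maps the
face of `conv S` maximizing `α'm + β'n` (with `αβ' - βα' > 0`) bijectively onto the face of
`conv (T S)` minimizing `(αβ' - βα')m + β'n`, a linear functional with strictly positive
coefficients. -/
theorem stmt_10 (S : Finset (ℤ × ℤ)) (hS : S.Nonempty)
    (α β : ℕ) (hα : 0 < α) (hβ : 0 < β)
    (δ : ℤ) (hδ : δ = S.sup' hS (fun p => (α : ℤ) * p.1 + (β : ℤ) * p.2))
    (T : ℝ × ℝ → ℝ × ℝ)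
    (hT : ∀ q : ℝ × ℝ, T q = (q.1, (δ : ℝ) - (α : ℝ) * q.1 - (β : ℝ) * q.2))
    (α' β' : ℕ) (hα' : 0 < α') (hβ' : 0 < β')
    (hc : 0 < (α : ℤ) * (β' : ℤ) - (β : ℤ) * (α' : ℤ))
    (K K' F F' : Set (ℝ × ℝ))
    (hK : K = convexHull ℝ ((fun p : ℤ × ℤ => ((p.1 : ℝ), (p.2 : ℝ))) '' ↑S))
    (hK' : K' = convexHull ℝ ((fun p : ℤ × ℤ => T ((p.1 : ℝ), (p.2 : ℝ))) '' ↑S))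
    (hF : F = {p ∈ K | ∀ q ∈ K,
      (α' : ℝ) * q.1 + (β' : ℝ) * q.2 ≤ (α' : ℝ) * p.1 + (β' : ℝ) * p.2})
    (hF' : F' = {p ∈ K' | ∀ q ∈ K',
      ((α : ℝ) * (β' : ℝ) - (β : ℝ) * (α' : ℝ)) * p.1 + (β' : ℝ) * p.2 ≤
        ((α : ℝ) * (β' : ℝ) - (β : ℝ) * (α' : ℝ)) * q.1 + (β' : ℝ) * q.2}) :
    Set.BijOn T F F' ∧
      (0 < (α : ℝ) * (β' : ℝ) - (β : ℝ) * (α' : ℝ) ∧ (0 : ℝ) < (β' : ℝ)) := by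
  have hβ0 : (0 : ℝ) < β := by exact_mod_cast hβ
  have hc0 : 0 < (α : ℝ) * (β' : ℝ) - (β : ℝ) * (α' : ℝ) := by exact_mod_cast hc
  have hβ'0 : (0 : ℝ) < β' := by exact_mod_cast hβ'
  let L : ℝ × ℝ →ₗ[ℝ] ℝ × ℝ := (LinearMap.fst ℝ ℝ ℝ).prod
    (-((α : ℝ) • LinearMap.fst ℝ ℝ ℝ) - (β : ℝ) • LinearMap.snd ℝ ℝ ℝ)
  let A : ℝ × ℝ →ᵃ[ℝ] ℝ × ℝ :=
    L.toAffineMap + AffineMap.const ℝ (ℝ × ℝ) ((0 : ℝ), (δ : ℝ))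
  have hA : (A : ℝ × ℝ → ℝ × ℝ) = T := by
    funext q
    rw [hT]
    ext
    · simp [A, L]
    · simp [A, L]
      ring
  have hKK : K' = T '' K := by
    rw [hK, hK', ← hA, AffineMap.image_convexHull, Set.image_image]
  have key : ∀ q : ℝ × ℝ, ((α : ℝ) * (β' : ℝ) - (β : ℝ) * (α' : ℝ)) * (T q).1 + (β' : ℝ) * (T q).2
      = β' * δ - β * ((α' : ℝ) * q.1 + (β' : ℝ) * q.2) := by
    intro q
    rw [hT]
    ring
  refine ⟨⟨?_, ?_, ?_⟩, hc0, hβ'0⟩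
  · intro p hp
    rw [hF] at hp
    rw [hF', hKK]
    refine ⟨Set.mem_image_of_mem T hp.1, ?_⟩
    rintro _ ⟨q, hq, rfl⟩
    rw [key, key]
    have := mul_le_mul_of_nonneg_left (hp.2 q hq) hβ0.le
    linarith
  · intro p _ q _ h
    rw [hT, hT, Prod.mk.injEq] at h
    obtain ⟨h1, h2⟩ := h
    rw [h1] at h2
    ext
    · exact h1
    · exact mul_left_cancel₀ hβ0.ne' (by linarith)
  · intro p' hp
    rw [hF', hKK] at hp
    obtain ⟨⟨p, hpK, rfl⟩, hmin⟩ := hp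
    refine ⟨p, ?_, rfl⟩
    rw [hF]
    refine ⟨hpK, fun q hq => ?_⟩
    have := hmin (T q) (Set.mem_image_of_mem T hq)
    rw [key, key] at this
    exact le_of_mul_le_mul_left (by linarith) hβ0
end

section
/- Let S ⊆ ℤ² be a finite nonempty set, let α, β be positive integers, and set δ = max_{(m,n)∈S} (α·m + β·n). Define the affine map R : ℝ² → ℝ² by R(m, n) = (n, δ − α·m − β·n). Let α', β' be positive integers with β·α' − α·β' > 0. Then R restricts to a bijection from the set F = {p ∈ conv(S) : α'·p₁ + β'·p₂ = max_{q∈conv(S)} (α'·q₁ + β'·q₂)} onto the set F' = {p ∈ conv(R(S)) : (α'·β − α·β')·p₁ + α'·p₂ = min_{q∈conv(R(S))} ((α'·β − α·β')·q₁ + α'·q₂)}; here conv denotes the convex hull in ℝ², and the linear functional defining F' has both coefficients strictly positive. -/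
/-- Effect of the Poincaré–Lyapunov compactification in the positive
`x`-direction on the Newton polytope: the affine map `R(m,n) = (n, δ - αm - βn)` maps the
face of `conv S` maximizing `α'm + β'n` (with `βα' - αβ' > 0`) bijectively onto the face of
`conv (R S)` minimizing `(α'β - αβ')m + α'n`, a linear functional with strictly positive
coefficients. -/
theorem stmt_12 (S : Finset (ℤ × ℤ)) (hS : S.Nonempty)
    (α β : ℕ) (hα : 0 < α) (hβ : 0 < β)
    (δ : ℤ) (hδ : δ = S.sup' hS (fun p => (α : ℤ) * p.1 + (β : ℤ) * p.2))
    (R : ℝ × ℝ → ℝ × ℝ)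
    (hR : ∀ q : ℝ × ℝ, R q = (q.2, (δ : ℝ) - (α : ℝ) * q.1 - (β : ℝ) * q.2))
    (α' β' : ℕ) (hα' : 0 < α') (hβ' : 0 < β')
    (hc : 0 < (β : ℤ) * (α' : ℤ) - (α : ℤ) * (β' : ℤ))
    (K K' F F' : Set (ℝ × ℝ))
    (hK : K = convexHull ℝ ((fun p : ℤ × ℤ => ((p.1 : ℝ), (p.2 : ℝ))) '' ↑S))
    (hK' : K' = convexHull ℝ ((fun p : ℤ × ℤ => R ((p.1 : ℝ), (p.2 : ℝ))) '' ↑S))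
    (hF : F = {p ∈ K | ∀ q ∈ K,
      (α' : ℝ) * q.1 + (β' : ℝ) * q.2 ≤ (α' : ℝ) * p.1 + (β' : ℝ) * p.2})
    (hF' : F' = {p ∈ K' | ∀ q ∈ K',
      ((α' : ℝ) * (β : ℝ) - (α : ℝ) * (β' : ℝ)) * p.1 + (α' : ℝ) * p.2 ≤
        ((α' : ℝ) * (β : ℝ) - (α : ℝ) * (β' : ℝ)) * q.1 + (α' : ℝ) * q.2}) :
    Set.BijOn R F F' ∧
      (0 < (α' : ℝ) * (β : ℝ) - (α : ℝ) * (β' : ℝ) ∧ (0 : ℝ) < (α' : ℝ)) := by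
  have hαR : (0 : ℝ) < α := by exact_mod_cast hα
  have hα'R : (0 : ℝ) < α' := by exact_mod_cast hα'
  have hcR : (0 : ℝ) < (α' : ℝ) * (β : ℝ) - (α : ℝ) * (β' : ℝ) := by
    have h : (0 : ℝ) < (β : ℝ) * (α' : ℝ) - (α : ℝ) * (β' : ℝ) := by exact_mod_cast hc
    linarith
  refine ⟨?_, hcR, hα'R⟩
  let L : (ℝ × ℝ) →ₗ[ℝ] (ℝ × ℝ) :=
    { toFun := fun q => (q.2, -(α : ℝ) * q.1 - (β : ℝ) * q.2)
      map_add' := by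
        intro x y
        ext
        · simp
        · simp
          ring
      map_smul' := by
        intro c x
        ext
        · simp
        · simp
          ring }
  let A : (ℝ × ℝ) →ᵃ[ℝ] (ℝ × ℝ) :=
    L.toAffineMap + AffineMap.const ℝ (ℝ × ℝ) ((0 : ℝ), (δ : ℝ))
  have hA : ∀ q, A q = R q := by
    intro q
    rw [hR]
    ext
    · simp [A, L]
    · simp [A, L]
      ring
  have hAR : (A : ℝ × ℝ → ℝ × ℝ) = R := funext hA
  have hKK : K' = R '' K := by
    rw [hK, hK', ← hAR, AffineMap.image_convexHull, Set.image_image]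
  have key : ∀ q : ℝ × ℝ,
      ((α' : ℝ) * (β : ℝ) - (α : ℝ) * (β' : ℝ)) * (R q).1 + (α' : ℝ) * (R q).2
        = (α' : ℝ) * δ - α * ((α' : ℝ) * q.1 + (β' : ℝ) * q.2) := by
    intro q
    rw [hR]
    ring
  have hle : ∀ p q : ℝ × ℝ,
      ((α' : ℝ) * (β : ℝ) - (α : ℝ) * (β' : ℝ)) * (R p).1 + (α' : ℝ) * (R p).2 ≤
        ((α' : ℝ) * (β : ℝ) - (α : ℝ) * (β' : ℝ)) * (R q).1 + (α' : ℝ) * (R q).2 ↔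
      (α' : ℝ) * q.1 + (β' : ℝ) * q.2 ≤ (α' : ℝ) * p.1 + (β' : ℝ) * p.2 := by
    intro p q
    rw [key, key, sub_le_sub_iff_left, mul_le_mul_iff_right₀ hαR]
  subst hF hF'
  refine ⟨?_, ?_, ?_⟩
  · rintro p ⟨hp, hmax⟩
    rw [hKK]
    refine ⟨⟨p, hp, rfl⟩, ?_⟩
    rintro _ ⟨q, hq, rfl⟩
    exact (hle p q).2 (hmax q hq)
  · intro p _ q _ h
    rw [hR, hR, Prod.mk.injEq] at h
    obtain ⟨h1, h2⟩ := h
    rw [h1] at h2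
    have h3 : (α : ℝ) * p.1 = α * q.1 := by linarith
    exact Prod.ext (mul_left_cancel₀ hαR.ne' h3) h1
  · rintro _ ⟨hp, hmin⟩
    rw [hKK] at hp hmin
    obtain ⟨p, hp, rfl⟩ := hp
    exact ⟨p, ⟨hp, fun q hq => (hle p q).1 (hmin _ ⟨q, hq, rfl⟩)⟩, rfl⟩
end

section
/- Let S ⊆ ℤ² be a finite nonempty set and a, b : ℤ² → ℝ with a_{m,n} = 0 whenever m < −1 or n ≤ −1, b_{m,n} = 0 whenever m ≤ −1 or n < −1, and S = {(m,n) : a_{m,n}² + b_{m,n}² ≠ 0}. Let P(x,y) = Σ_{(m,n)∈S} a_{m,n}·x^(m+1)·y^n and Q(x,y) = Σ_{(m,n)∈S} b_{m,n}·x^m·y^(n+1), and set M = max_{(m,n)∈S} (m+n). For λ ∈ ℝ define the polynomials P_λ(x,y) = P(x+λ·y, y) − λ·Q(x+λ·y, y) and Q_λ(x,y) = Q(x+λ·y, y), let a^λ, b^λ be the unique coefficient families with P_λ(x,y) = Σ a^λ_{m,n}·x^(m+1)·y^n and Q_λ(x,y) = Σ b^λ_{m,n}·x^m·y^(n+1)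 (subject to a^λ_{m,n} = 0 for m < −1 or n ≤ −1 and b^λ_{m,n} = 0 for m ≤ −1 or n < −1), and let S_λ = {(m,n) : (a^λ_{m,n})² + (b^λ_{m,n})² ≠ 0}. Then for all but finitely many λ ∈ ℝ: every (m,n) ∈ S_λ satisfies m + n ≤ M, and there exists (m*, n*) ∈ S_λ with m* ∈ {−1, 0}, m* + n* = M, and n* ≥ n for every (m,n) ∈ S_λ. -/
theorem aux_key {ι κ : Type*} (s : Finset ι) (s' : Finset κ) (c : ι → ℝ) (c' : κ → ℝ)
    (e : ι → ℤ) (e' : κ → ℤ) (he : ∀ i ∈ s, 0 ≤ e i) (he' : ∀ i ∈ s', 0 ≤ e' i)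
    (T : Set ℝ) (hT : T.Infinite)
    (h : ∀ t ∈ T, ∑ i ∈ s, c i * t ^ e i = ∑ i ∈ s', c' i * t ^ e' i) (k : ℤ) :
    ∑ i ∈ s with e i = k, c i = ∑ i ∈ s' with e' i = k, c' i := by
  classical
  by_cases hk : 0 ≤ k
  · have key : (∑ i ∈ s, Polynomial.C (c i) * Polynomial.X ^ (e i).toNat) =
        ∑ i ∈ s', Polynomial.C (c' i) * Polynomial.X ^ (e' i).toNat := by
      apply Polynomial.eq_of_infinite_eval_eq
      refine hT.mono ?_
      intro t ht
      simp only [Set.mem_setOf_eq, Polynomial.eval_finset_sum, Polynomial.eval_mul,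
        Polynomial.eval_C, Polynomial.eval_pow, Polynomial.eval_X]
      have e1 : ∑ i ∈ s, c i * t ^ (e i).toNat = ∑ i ∈ s, c i * t ^ e i := by
        refine Finset.sum_congr rfl fun i hi => ?_
        rw [← zpow_natCast, Int.toNat_of_nonneg (he i hi)]
      have e2 : ∑ i ∈ s', c' i * t ^ (e' i).toNat = ∑ i ∈ s', c' i * t ^ e' i := by
        refine Finset.sum_congr rfl fun i hi => ?_
        rw [← zpow_natCast, Int.toNat_of_nonneg (he' i hi)]
      rw [e1, e2, h t ht]
    have h2 := congrArg (fun p => Polynomial.coeff p k.toNat) key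
    simp only [Polynomial.finset_sum_coeff, Polynomial.coeff_C_mul, Polynomial.coeff_X_pow,
      mul_ite, mul_one, mul_zero] at h2
    rw [Finset.sum_filter, Finset.sum_filter]
    convert h2 using 1
    · refine Finset.sum_congr rfl fun i hi => ?_
      have := he i hi
      congr 1
      apply propext
      omega
    · refine Finset.sum_congr rfl fun i hi => ?_
      have := he' i hi
      congr 1
      apply propext
      omega
  · rw [Finset.filter_false_of_mem, Finset.filter_false_of_mem]
    · simp
    · intro i hi
      have := he' i hi
      omega
    · intro i hi
      have := he i hi
      omega

theorem aux_nz : ({t : ℝ | t ≠ 0}).Infinite := by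
  have : ({t : ℝ | t ≠ 0}) = ({0} : Set ℝ)ᶜ := by ext; simp
  rw [this]
  exact (Set.finite_singleton (0 : ℝ)).infinite_compl

/-- coefficients on a diagonal vanish if the restricted function vanishes. -/
theorem aux_diag (S : Finset (ℤ × ℤ)) (hS : ∀ p ∈ S, 0 ≤ p.1 + 1) (k : ℤ) (c : ℤ × ℤ → ℝ)
    (T : Set ℝ) (hT : T.Infinite)
    (h : ∀ t ∈ T, ∑ p ∈ S with p.1 + p.2 + 1 = k, c p * t ^ (p.1 + 1) = 0)
    (q : ℤ × ℤ) (hq : q ∈ S) (hqk : q.1 + q.2 + 1 = k) : c q = 0 := by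
  classical
  have := aux_key (S.filter fun p => p.1 + p.2 + 1 = k) (∅ : Finset ℕ) c (fun _ => 0)
    (fun p => p.1 + 1) (fun _ => 0)
    (fun p hp => hS p (Finset.mem_filter.1 hp).1) (by simp) T hT (by simpa using h) (q.1 + 1)
  have h2 : ((S.filter fun p => p.1 + p.2 + 1 = k).filter fun p => p.1 + 1 = q.1 + 1) = {q} := by
    ext ⟨m, n⟩
    obtain ⟨q1, q2⟩ := q
    simp only [Finset.mem_filter, Finset.mem_singleton, Prod.mk.injEq] at *
    constructor
    · rintro ⟨⟨_, _⟩, _⟩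
      omega
    · rintro ⟨rfl, rfl⟩
      exact ⟨⟨hq, hqk⟩, rfl⟩
  rw [h2] at this
  simpa using this

theorem aux_scale (t u y : ℝ) (ht : t ≠ 0) (m n k : ℤ) (h : m + n = k) (c : ℝ) :
    c * (t * u) ^ m * (t * y) ^ n = c * u ^ m * y ^ n * t ^ k := by
  rw [mul_zpow, mul_zpow, ← h, zpow_add₀ ht]
  ring

theorem aux_supp (S : Finset (ℤ × ℤ)) (a b : ℤ × ℤ → ℝ)
    (ha : ∀ m n : ℤ, m < -1 ∨ n ≤ -1 → a (m, n) = 0)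
    (hb : ∀ m n : ℤ, m ≤ -1 ∨ n < -1 → b (m, n) = 0)
    (hSsupp : ∀ p : ℤ × ℤ, p ∈ S ↔ (a p) ^ 2 + (b p) ^ 2 ≠ 0) (p : ℤ × ℤ) (hp : p ∈ S) :
    0 ≤ p.1 + 1 ∧ 0 ≤ p.1 + p.2 + 1 := by
  obtain ⟨m, n⟩ := p
  rw [hSsupp] at hp
  by_contra hcon
  apply hp
  have h1 : a (m, n) = 0 := by
    apply ha
    simp only at hcon
    omega
  have h2 : b (m, n) = 0 := by
    apply hb
    simp only at hcon
    omega
  rw [h1, h2]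
  simp


/-- After the linear change of coordinates `x̃ = x - λy`, `ỹ = y`, for all but
finitely many `λ` the support `S_λ` of the transformed vector field (logarithmic basis)
satisfies `m + n ≤ M` for all its points, and contains a point `(m*, n*)` with
`m* ∈ {-1, 0}`, `m* + n* = M` and maximal second coordinate. -/
theorem stmt_13 (S : Finset (ℤ × ℤ)) (hS : S.Nonempty) (a b : ℤ × ℤ → ℝ)
    (ha : ∀ m n : ℤ, m < -1 ∨ n ≤ -1 → a (m, n) = 0)
    (hb : ∀ m n : ℤ, m ≤ -1 ∨ n < -1 → b (m, n) = 0)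
    (hSsupp : ∀ p : ℤ × ℤ, p ∈ S ↔ (a p) ^ 2 + (b p) ^ 2 ≠ 0)
    (M : ℤ) (hM : M = S.sup' hS (fun p => p.1 + p.2))
    (P Q : ℝ → ℝ → ℝ)
    (hP : ∀ x y : ℝ, P x y = ∑ p ∈ S, a p * x ^ (p.1 + 1) * y ^ p.2)
    (hQ : ∀ x y : ℝ, Q x y = ∑ p ∈ S, b p * x ^ p.1 * y ^ (p.2 + 1)) :
    {lam : ℝ | ¬ ∀ (S' : Finset (ℤ × ℤ)) (a' b' : ℤ × ℤ → ℝ),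
      (∀ m n : ℤ, m < -1 ∨ n ≤ -1 → a' (m, n) = 0) →
      (∀ m n : ℤ, m ≤ -1 ∨ n < -1 → b' (m, n) = 0) →
      (∀ p : ℤ × ℤ, p ∈ S' ↔ (a' p) ^ 2 + (b' p) ^ 2 ≠ 0) →
      (∀ x y : ℝ, P (x + lam * y) y - lam * Q (x + lam * y) y =
        ∑ p ∈ S', a' p * x ^ (p.1 + 1) * y ^ p.2) →
      (∀ x y : ℝ, Q (x + lam * y) y = ∑ p ∈ S', b' p * x ^ p.1 * y ^ (p.2 + 1)) →
      ((∀ p ∈ S', p.1 + p.2 ≤ M) ∧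
        ∃ p' ∈ S', (p'.1 = -1 ∨ p'.1 = 0) ∧ p'.1 + p'.2 = M ∧
          ∀ p ∈ S', p.2 ≤ p'.2)}.Finite := by
  classical
  have hsup := aux_supp S a b ha hb hSsupp
  have hle : ∀ p ∈ S, p.1 + p.2 ≤ M := by
    intro p hp
    rw [hM]
    exact Finset.le_sup' (fun p : ℤ × ℤ => p.1 + p.2) hp
  obtain ⟨q, hqS, hqM⟩ : ∃ q ∈ S, q.1 + q.2 = M := by
    obtain ⟨q, hq, h⟩ := Finset.exists_mem_eq_sup' hS (fun p : ℤ × ℤ => p.1 + p.2)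
    exact ⟨q, hq, by rw [hM, h]⟩
  have hfin : {lam : ℝ | lam = 0 ∨
      (∑ p ∈ S with p.1 + p.2 + 1 = M + 1, (a p - b p) * lam ^ (p.1 + 1) = 0 ∧
       ∑ p ∈ S with p.1 + p.2 + 1 = M + 1, b p * lam ^ (p.1 + 1) = 0)}.Finite := by
    by_contra hinf
    have hinf2 : {lam : ℝ | (∑ p ∈ S with p.1 + p.2 + 1 = M + 1, (a p - b p) * lam ^ (p.1 + 1) = 0 ∧
       ∑ p ∈ S with p.1 + p.2 + 1 = M + 1, b p * lam ^ (p.1 + 1) = 0)}.Infinite := by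
      intro hf
      exact hinf ((Set.finite_singleton (0 : ℝ)).union hf)
    have h1 := aux_diag S (fun p hp => (hsup p hp).1) (M + 1) (fun p => a p - b p) _ hinf2
      (fun t ht => ht.1) q hqS (by omega)
    have h2 := aux_diag S (fun p hp => (hsup p hp).1) (M + 1) b _ hinf2
      (fun t ht => ht.2) q hqS (by omega)
    have h3 : a q = 0 := by linarith
    exact (hSsupp q).1 hqS (by rw [h2, h3]; simp)
  refine hfin.subset ?_
  intro lam hlam
  by_contra hgood
  apply hlam
  clear hlam hfin
  simp only [Set.mem_setOf_eq, not_or, not_and] at hgood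
  obtain ⟨hl0, hgood⟩ := hgood
  intro S' a' b' ha' hb' hS' hPl hQl
  have hsup' := aux_supp S' a' b' ha' hb' hS'
  have E1 : ∀ x y : ℝ, ∀ k : ℤ, ∑ p ∈ S' with p.1 + p.2 + 1 = k, a' p * x ^ (p.1 + 1) * y ^ p.2 =
      ∑ p ∈ S with p.1 + p.2 + 1 = k, (a p * (x + lam * y) ^ (p.1 + 1) * y ^ p.2 -
        lam * (b p * (x + lam * y) ^ p.1 * y ^ (p.2 + 1))) := by
    intro x y k
    refine aux_key S' S (fun p => a' p * x ^ (p.1 + 1) * y ^ p.2)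
      (fun p => (a p * (x + lam * y) ^ (p.1 + 1) * y ^ p.2 -
        lam * (b p * (x + lam * y) ^ p.1 * y ^ (p.2 + 1)))) (fun p => p.1 + p.2 + 1)
      (fun p => p.1 + p.2 + 1) (fun p hp => (hsup' p hp).2) (fun p hp => (hsup p hp).2)
      _ aux_nz ?_ k
    intro t ht
    have h := hPl (t * x) (t * y)
    have hu : t * x + lam * (t * y) = t * (x + lam * y) := by ring
    rw [hu, hP, hQ, Finset.mul_sum, ← Finset.sum_sub_distrib] at h
    refine Eq.trans ?_ (h.symm.trans ?_)
    · refine Finset.sum_congr rfl fun p _ => ?_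
      rw [aux_scale t x y ht (p.1 + 1) p.2 (p.1 + p.2 + 1) (by ring)]
    · refine Finset.sum_congr rfl fun p _ => ?_
      rw [aux_scale t _ y ht (p.1 + 1) p.2 (p.1 + p.2 + 1) (by ring),
        aux_scale t _ y ht p.1 (p.2 + 1) (p.1 + p.2 + 1) (by ring)]
      ring
  have E2 : ∀ x y : ℝ, ∀ k : ℤ, ∑ p ∈ S' with p.1 + p.2 + 1 = k, b' p * x ^ p.1 * y ^ (p.2 + 1) =
      ∑ p ∈ S with p.1 + p.2 + 1 = k, b p * (x + lam * y) ^ p.1 * y ^ (p.2 + 1) := by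
    intro x y k
    refine aux_key S' S (fun p => b' p * x ^ p.1 * y ^ (p.2 + 1))
      (fun p => b p * (x + lam * y) ^ p.1 * y ^ (p.2 + 1)) (fun p => p.1 + p.2 + 1)
      (fun p => p.1 + p.2 + 1) (fun p hp => (hsup' p hp).2) (fun p hp => (hsup p hp).2)
      _ aux_nz ?_ k
    intro t ht
    have h := hQl (t * x) (t * y)
    have hu : t * x + lam * (t * y) = t * (x + lam * y) := by ring
    rw [hu, hQ] at h
    refine Eq.trans ?_ (h.symm.trans ?_)
    · refine Finset.sum_congr rfl fun p _ => ?_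
      rw [aux_scale t x y ht p.1 (p.2 + 1) (p.1 + p.2 + 1) (by ring)]
    · refine Finset.sum_congr rfl fun p _ => ?_
      rw [aux_scale t _ y ht p.1 (p.2 + 1) (p.1 + p.2 + 1) (by ring)]
  have hbound : ∀ p ∈ S', p.1 + p.2 ≤ M := by
    intro p hp
    by_contra hcon
    have hempty : (S.filter fun r => r.1 + r.2 + 1 = p.1 + p.2 + 1) = ∅ := by
      apply Finset.filter_false_of_mem
      intro r hr
      have := hle r hr
      omega
    have h1 := aux_diag S' (fun p hp => (hsup' p hp).1) (p.1 + p.2 + 1) a' _ aux_nz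
      (fun t ht => by
        have h := E1 t 1 (p.1 + p.2 + 1)
        rw [hempty] at h
        simpa using h) p hp rfl
    have h2 := aux_diag S' (fun p hp => (hsup' p hp).1) (p.1 + p.2 + 1) b' _ aux_nz
      (fun t ht => by
        have h := E2 t 1 (p.1 + p.2 + 1)
        rw [hempty] at h
        simp only [one_zpow, mul_one, Finset.sum_empty] at h
        have h3 : ∑ r ∈ S' with r.1 + r.2 + 1 = p.1 + p.2 + 1, b' r * t ^ (r.1 + 1) =
            (∑ r ∈ S' with r.1 + r.2 + 1 = p.1 + p.2 + 1, b' r * t ^ r.1) * t := by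
          rw [Finset.sum_mul]
          refine Finset.sum_congr rfl fun r _ => ?_
          rw [zpow_add_one₀ ht]
          ring
        rw [h3, h, zero_mul]) p hp rfl
    exact (hS' p).1 hp (by rw [h1, h2]; simp)
  refine ⟨hbound, ?_⟩
  have hnot : ∀ p, p ∉ S' → a' p = 0 ∧ b' p = 0 := by
    intro p hp
    rw [hS', not_not] at hp
    constructor <;> exact pow_eq_zero_iff (two_ne_zero) |>.1 (by nlinarith [sq_nonneg (a' p), sq_nonneg (b' p)])
  have A1 : a' (-1, M + 1) =
      ∑ p ∈ S with p.1 + p.2 + 1 = M + 1, (a p - b p) * lam ^ (p.1 + 1) := by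
    have h := E1 0 1 (M + 1)
    rw [Finset.sum_eq_single (-1, M + 1)] at h
    · simp only [zero_add, mul_one, one_zpow, neg_add_cancel, zpow_zero] at h
      rw [h]
      refine Finset.sum_congr rfl fun p _ => ?_
      rw [zpow_add_one₀ hl0]
      ring
    · rintro ⟨m, n⟩ hp hne
      have hm : m + 1 ≠ 0 := by
        intro hm
        apply hne
        have := (Finset.mem_filter.1 hp).2
        simp only [Prod.mk.injEq] at this ⊢
        omega
      simp [zero_zpow _ hm]
    · intro hn
      have : ((-1, M + 1) : ℤ × ℤ) ∉ S' := fun h' => hn (Finset.mem_filter.2 ⟨h', by simp⟩)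
      simp [(hnot _ this).1]
  have B1 : b' (0, M) * lam =
      ∑ p ∈ S with p.1 + p.2 + 1 = M + 1, b p * lam ^ (p.1 + 1) := by
    have h := E2 0 1 (M + 1)
    rw [Finset.sum_eq_single (0, M)] at h
    · simp only [zero_add, mul_one, one_zpow, zpow_zero] at h
      rw [h, Finset.sum_mul]
      refine Finset.sum_congr rfl fun p _ => ?_
      rw [zpow_add_one₀ hl0]
      ring
    · rintro ⟨m, n⟩ hp hne
      have hm : m ≠ 0 := by
        intro hm
        apply hne
        have := (Finset.mem_filter.1 hp).2
        simp only [Prod.mk.injEq] at this ⊢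
        omega
      simp [zero_zpow _ hm]
    · intro hn
      have : ((0, M) : ℤ × ℤ) ∉ S' := fun h' => hn (Finset.mem_filter.2 ⟨h', by simp⟩)
      simp [(hnot _ this).2]
  by_cases hA : a' (-1, M + 1) = 0
  · have hB : b' (0, M) ≠ 0 := by
      intro hB
      rw [hB, zero_mul] at B1
      exact hgood (A1.symm.trans hA) B1.symm
    have hmem : ((0, M) : ℤ × ℤ) ∈ S' := by
      by_contra hn
      exact hB (hnot _ hn).2
    refine ⟨(0, M), hmem, Or.inr rfl, by simp, ?_⟩
    rintro ⟨m, n⟩ hp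
    have h1 := hbound _ hp
    have h2 := (hsup' _ hp).1
    simp only at h1 h2 ⊢
    by_contra hcon
    obtain rfl : m = -1 := by omega
    obtain rfl : n = M + 1 := by omega
    exact (hS' _).1 hp (by rw [hA, hb' _ _ (Or.inl le_rfl)]; simp)
  · have hmem : ((-1, M + 1) : ℤ × ℤ) ∈ S' := by
      by_contra hn
      exact hA (hnot _ hn).1
    refine ⟨(-1, M + 1), hmem, Or.inl rfl, by simp, ?_⟩
    rintro ⟨m, n⟩ hp
    have h1 := hbound _ hp
    have h2 := (hsup' _ hp).1
    simp only at h1 h2 ⊢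
    omega
end
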